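/- For every 0 < δ ≤ 1 there exists a constant C = C(δ) > 0 such that the following holds: for every 0 < ε ≤ 1, every n, every admissible tuple (a,b,c), and every A ⊆ F_q^n, if A' ⊆ A satisfies |A'| ≥ δ|A| and every x ∈ A' has at most |A|^ε pairs (y,z) ∈ A^2 with ax+by+cz = 0, then there exists a subset I ⊆ A' that is a cap set for (a,b,c) with |I| ≥ C·|A'|^{1−ε/3}. -/

import Mathlib

/-!
With `τ = b / a` the equation reads `x + τ y = (1 + τ) z`. Intersect `A'` with a random set `S` that
contains each point with probability at least `μ` and each nonconstant solution with probability at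
most `μ ρ`, then delete a point of every surviving solution. If `ρ ≤ μ ^ 3`, powers of `S` give the
exponent `1 - ε / 3`; the point is to find such an `S` with `ρ` bounded below independently of `F`,
`τ` and the dimension.

Hash a vector `v` to the leading digits, modulo `M`, of `χ (τ ^ i v)` for `i < k` and several random
functionals `χ`, and let `S` be the set of vectors whose digits lie in a given set of digit vectors.
The equation imposes on the digits those integral linear relations with small coefficients that
hold between the powers of `τ`, in particular `xᵢ + yᵢ₊₁ = zᵢ + zᵢ₊₁`. Thus `τ` acts on digits as
the shift, and the digit set can be taken to be a cap in a module of recurrent sequences over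
`ℤ / M`, with `M` a prime power. The bound `ρ ≤ μ ^ 3` requires a cap of exponent greater than
`2 / 3`. Over a field, elliptic paraboloids have exponent exactly `2 / 3`, products of them with one
extra point in an arbitrary position together with deletion exceed it, and caps lift along module
extensions.

If `τ` is a root of a fixed integer polynomial `f`, this polynomial is the characteristic
polynomial of the recurrence; if not, the two terms of the sequences at the end of the window are
prescribed. This fails only in small characteristic, where exact values replace leading digits, or
if `τ` is a root of one of finitely many polynomials of degree less than `k`. The latter are treated
by induction on the degree, the roots `0` and `-1` being excluded.
-/

section Deletion

theorem exists_subset_avoiding {V : Type*} (B : Finset V) (D : Finset (V × V × V)) :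
    ∃ I ⊆ B, (∀ x y z, (x, y, z) ∈ D → x ∉ I) ∧ (B.card : ℝ) - D.card ≤ I.card := by
  classical
  refine ⟨B \ D.image Prod.fst, Finset.sdiff_subset, fun x y z h hx => ?_, ?_⟩
  · exact (Finset.mem_sdiff.1 hx).2 (Finset.mem_image_of_mem Prod.fst h)
  · have hle : B.card ≤ (B \ D.image Prod.fst).card + D.card :=
      (Nat.sub_le_iff_le_add.1 (Finset.le_card_sdiff _ _)).trans
        (Nat.add_le_add_left Finset.card_image_le _)
    rw [sub_le_iff_le_add]
    exact_mod_cast hle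

theorem sum_card_filter_mem_eq_sum_ncard {α Ω : Type*} [Fintype Ω] (s : Finset α)
    (E : Ω → Set α) [∀ ω, DecidablePred (· ∈ E ω)] :
    ∑ ω, ((s.filter (· ∈ E ω)).card : ℝ) = ∑ x ∈ s, ({ω | x ∈ E ω}.ncard : ℝ) := by
  have h := Finset.sum_card_bipartiteAbove_eq_sum_card_bipartiteBelow (s := Finset.univ)
    (t := s) fun ω x => x ∈ E ω
  simp only [Finset.bipartiteAbove, Finset.bipartiteBelow] at h
  simp_rw [Set.ncard_eq_toFinset_card', Set.toFinset_ofPred]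
  exact_mod_cast h

/-- The deletion method: for a suitable `ω`, delete a point of each triple of `T` inside `S ω`. -/
theorem exists_subset_avoiding_of_random {V Ω : Type*} [Finite Ω] [Nonempty Ω] (A : Finset V)
    (T : Finset (V × V × V)) (S : Ω → Set V) {a b : ℝ}
    (hA : ∀ x ∈ A, a * Nat.card Ω ≤ {ω | x ∈ S ω}.ncard)
    (hT : ∀ x y z, (x, y, z) ∈ T →
      ({ω | x ∈ S ω ∧ y ∈ S ω ∧ z ∈ S ω}.ncard : ℝ) ≤ b * Nat.card Ω) :
    ∃ I ⊆ A, (∀ x y z, (x, y, z) ∈ T → ¬ (x ∈ I ∧ y ∈ I ∧ z ∈ I)) ∧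
      a * A.card - b * T.card ≤ I.card := by
  classical
  have := Fintype.ofFinite Ω
  let S₃ ω : Set (V × V × V) := {t | t.1 ∈ S ω ∧ t.2.1 ∈ S ω ∧ t.2.2 ∈ S ω}
  let B ω := A.filter (· ∈ S ω)
  let D ω := T.filter (· ∈ S₃ ω)
  obtain ⟨ω, -, hω⟩ : ∃ ω ∈ Finset.univ,
      a * A.card - b * T.card ≤ (B ω).card - (D ω).card := by
    refine Finset.exists_le_of_sum_le Finset.univ_nonempty ?_
    rw [Finset.sum_const, Finset.card_univ, nsmul_eq_mul, ← Nat.card_eq_fintype_card]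
    rw [Finset.sum_sub_distrib, sum_card_filter_mem_eq_sum_ncard A S,
      sum_card_filter_mem_eq_sum_ncard T S₃]
    have hB := Finset.card_nsmul_le_sum A _ _ hA
    have hD := Finset.sum_le_card_nsmul T _ _ fun t ht => hT t.1 t.2.1 t.2.2 ht
    rw [nsmul_eq_mul] at hB hD
    exact (sub_le_sub hB hD).trans' (by linarith)
  obtain ⟨I, hIB, hID, hI⟩ := exists_subset_avoiding (B ω) (D ω)
  have hIS : ∀ x ∈ I, x ∈ S ω := fun x hx => (Finset.mem_filter.1 (hIB hx)).2
  exact ⟨I, hIB.trans (Finset.filter_subset _ _), fun x y z h ⟨hx, hy, hz⟩ => hID x y z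
    (Finset.mem_filter.2 ⟨h, hIS x hx, hIS y hy, hIS z hz⟩) hx, hω.trans hI⟩

theorem ncard_setOf_forall {Ω : Type*} (j : ℕ) (E : Set Ω) :
    {ω : Fin j → Ω | ∀ i, ω i ∈ E}.ncard = E.ncard ^ j := by
  rw [← Nat.card_coe_set_eq, ← Nat.card_coe_set_eq]
  exact (Nat.card_congr Equiv.subtypePiEquivPi).trans (by simp [Nat.card_pi])

theorem exists_subset_avoiding_of_random_pow {V Ω : Type*} [Finite Ω] [Nonempty Ω]
    (A : Finset V) (T : Finset (V × V × V)) (S : Ω → Set V) {a b : ℝ} (ha : 0 ≤ a) (j : ℕ)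
    (hA : ∀ x ∈ A, a * Nat.card Ω ≤ {ω | x ∈ S ω}.ncard)
    (hT : ∀ x y z, (x, y, z) ∈ T →
      ({ω | x ∈ S ω ∧ y ∈ S ω ∧ z ∈ S ω}.ncard : ℝ) ≤ b * Nat.card Ω) :
    ∃ I ⊆ A, (∀ x y z, (x, y, z) ∈ T → ¬ (x ∈ I ∧ y ∈ I ∧ z ∈ I)) ∧
      a ^ j * A.card - b ^ j * T.card ≤ I.card := by
  have hcard : (Nat.card (Fin j → Ω) : ℝ) = (Nat.card Ω : ℝ) ^ j := by simp [Nat.card_pi]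
  refine exists_subset_avoiding_of_random A T (fun ω : Fin j → Ω => {x | ∀ i, x ∈ S (ω i)}) ?_ ?_
  · intro x hx
    have h := ncard_setOf_forall j {ω | x ∈ S ω}
    simp only [Set.mem_ofPred_eq] at h ⊢
    rw [h, hcard, ← mul_pow, Nat.cast_pow]
    exact pow_le_pow_left₀ (by positivity) (hA x hx) j
  · intro x y z ht
    have h := ncard_setOf_forall j {ω | x ∈ S ω ∧ y ∈ S ω ∧ z ∈ S ω}
    simp only [Set.mem_ofPred_eq, ← forall_and] at h ⊢
    rw [h, hcard, ← mul_pow, Nat.cast_pow]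
    exact pow_le_pow_left₀ (by positivity) (hT x y z ht) j

end Deletion

section Sieve

variable {R V : Type*} [CommRing R] [AddCommGroup V] [Module R V]

/-- The solutions `(x, y, z)` of `x + τ y = (1 + τ) z` with all three entries in `A`. -/
def capSolutions (τ : R) (A : Set V) : Set (V × V × V) :=
  {t | t.1 ∈ A ∧ t.2.1 ∈ A ∧ t.2.2 ∈ A ∧ t.1 + τ • t.2.1 = (1 + τ) • t.2.2}

/-- A cap set for the equation `x + τ y = (1 + τ) z`: all its solutions are constant. For an
admissible tuple `(a, b, c)` over a field this is the notion of a cap set, with `τ = b / a`; it is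
stated over rings because caps are built in modules over residue rings `ℤ / l ^ j`. -/
def IsCap (τ : R) (I : Set V) : Prop :=
  ∀ x ∈ I, ∀ y ∈ I, ∀ z ∈ I, x + τ • y = (1 + τ) • z → y = z

/-- A cap sieve with loss `c` is a random subset `S` of `V` which contains each point with
probability at least `μ` and each nonconstant solution of `x + τ y = (1 + τ) z` with probability
at most `μ ρ`, where `c ≤ ρ ≤ μ ^ 3`. Probabilities are proportions in a finite type `Ω`. -/
def HasCapSieve (τ : R) (V : Type*) [AddCommGroup V] [Module R V] (c : ℝ) : Prop :=
  ∃ (Ω : Type) (_ : Finite Ω) (_ : Nonempty Ω) (S : Ω → Set V) (μ ρ : ℝ),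
    c ≤ ρ ∧ ρ ≤ 1 / 2 ∧ 0 ≤ μ ∧ ρ ≤ μ ^ 3 ∧
    (∀ x, μ * Nat.card Ω ≤ {ω | x ∈ S ω}.ncard) ∧
    ∀ x y z, x + τ • y = (1 + τ) • z → y ≠ z →
      ({ω | x ∈ S ω ∧ y ∈ S ω ∧ z ∈ S ω}.ncard : ℝ) ≤ μ * ρ * Nat.card Ω

theorem HasCapSieve.mono {τ : R} {c c' : ℝ} (h : HasCapSieve τ V c) (hc : c' ≤ c) :
    HasCapSieve τ V c' := by
  obtain ⟨Ω, hf, hn, S, μ, ρ, hcρ, hS⟩ := h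
  exact ⟨Ω, hf, hn, S, μ, ρ, hc.trans hcρ, hS⟩

theorem exists_pow_near_inv {ρ d : ℝ} (hρ : 0 < ρ) (hρ2 : ρ ≤ 1 / 2) (hd : 1 ≤ d) :
    ∃ j : ℕ, d * ρ ^ j ≤ 1 / 2 ∧ ρ / (2 * d) ≤ ρ ^ j := by
  have : 0 < d := by linarith
  have hx1 : 1 / (2 * d) ≤ 1 := (div_le_one (by positivity)).2 (by linarith)
  obtain ⟨k, hk1, hk2⟩ := exists_nat_pow_near_of_lt_one (by positivity) hx1 hρ (by linarith)
  refine ⟨k + 1, ?_, ?_⟩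
  · calc d * ρ ^ (k + 1) ≤ d * (1 / (2 * d)) := by gcongr
      _ = 1 / 2 := by field_simp
  · calc ρ / (2 * d) = 1 / (2 * d) * ρ := by ring
      _ ≤ ρ ^ k * ρ := by gcongr
      _ = ρ ^ (k + 1) := (pow_succ ρ k).symm

/-- The power of the sieve is chosen such that a point survives with probability about
`d ^ (-1 / 3)` and the surviving solutions number at most half the surviving points. -/
theorem HasCapSieve.exists_isCap [Finite V] {τ : R} {c : ℝ} (hc : 0 < c)
    (hS : HasCapSieve τ V c) {A : Set V} {d : ℝ} (hd : 1 ≤ d)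
    (hA : ((capSolutions τ A).ncard : ℝ) ≤ d * A.ncard) :
    ∃ I ⊆ A, IsCap τ I ∧ 1 / 2 * (c / (2 * d)) ^ (1 / 3 : ℝ) * A.ncard ≤ I.ncard := by
  classical
  have := Fintype.ofFinite V
  obtain ⟨Ω, _, _, S, μ, ρ, hcρ, hρ2, hμ, hρμ, hpoint, htriple⟩ := hS
  have hρ : 0 < ρ := hc.trans_le hcρ
  obtain ⟨j, hdj, hρj⟩ := exists_pow_near_inv hρ hρ2 hd
  let T := (Set.toFinite (capSolutions τ A ∩ {t | t.2.1 ≠ t.2.2})).toFinset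
  obtain ⟨I, hIA, hIT, hI⟩ := exists_subset_avoiding_of_random_pow A.toFinset T S hμ j
    (fun x _ => hpoint x) fun x y z h =>
      have ⟨hsol, hyz⟩ := (Set.Finite.mem_toFinset _).1 h
      htriple x y z hsol.2.2.2 hyz
  have hIA' : ∀ x ∈ I, x ∈ A := fun x hx => Set.mem_toFinset.1 (hIA hx)
  refine ⟨I, hIA', fun x hx y hy z hz hxyz => ?_, ?_⟩
  · by_contra hyz
    refine hIT x y z ((Set.Finite.mem_toFinset _).2 ⟨?_, hyz⟩) ⟨hx, hy, hz⟩
    exact ⟨hIA' x hx, hIA' y hy, hIA' z hz, hxyz⟩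
  · rw [← Set.ncard_eq_toFinset_card'] at hI
    rw [Set.ncard_coe_finset]
    have hT : (T.card : ℝ) ≤ d * A.ncard := by
      rw [← Set.ncard_eq_toFinset_card]
      exact le_trans (mod_cast Set.ncard_le_ncard Set.inter_subset_left) hA
    have hhalf : (μ * ρ) ^ j * T.card ≤ μ ^ j * A.ncard * (1 / 2) :=
      calc (μ * ρ) ^ j * T.card ≤ (μ * ρ) ^ j * (d * A.ncard) := by gcongr
        _ = μ ^ j * A.ncard * (d * ρ ^ j) := by rw [mul_pow]; ring
        _ ≤ μ ^ j * A.ncard * (1 / 2) := by gcongr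
    have hroot : (c / (2 * d)) ^ (1 / 3 : ℝ) ≤ μ ^ j := by
      rw [one_div, Real.rpow_inv_le_iff_of_pos (by positivity) (by positivity) (by norm_num)]
      calc c / (2 * d) ≤ ρ / (2 * d) := by gcongr
        _ ≤ ρ ^ j := hρj
        _ ≤ (μ ^ 3) ^ j := by gcongr
        _ = (μ ^ j) ^ (3 : ℝ) := by norm_cast; rw [← pow_mul, ← pow_mul, mul_comm]
    calc 1 / 2 * (c / (2 * d)) ^ (1 / 3 : ℝ) * A.ncard ≤ 1 / 2 * μ ^ j * A.ncard := by gcongr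
      _ ≤ μ ^ j * A.ncard - (μ * ρ) ^ j * T.card := by linarith
      _ ≤ I.card := hI

end Sieve

section RandomTranslates

theorem ncard_setOf_mem_and_add_mem {Φ W : Type*} [AddGroup W] (f : Φ → W) (E : Set Φ)
    (U : Set W) :
    {ω : Φ × W | ω.1 ∈ E ∧ f ω.1 + ω.2 ∈ U}.ncard = E.ncard * U.ncard := by
  let e : Φ × W ≃ Φ × W := Equiv.prodShear (Equiv.refl Φ) fun φ => Equiv.addLeft (f φ)
  have hE : {ω : Φ × W | ω.1 ∈ E ∧ f ω.1 + ω.2 ∈ U} = e ⁻¹' (E ×ˢ U) := rfl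
  rw [hE, ← Set.ncard_prod, Set.ncard_preimage_of_injective_subset_range e.injective]
  simp [e.surjective.range_eq]

theorem ncard_setOf_add_mem {Φ W : Type*} [AddGroup W] (f : Φ → W) (U : Set W) :
    {ω : Φ × W | f ω.1 + ω.2 ∈ U}.ncard = Nat.card Φ * U.ncard := by
  simpa using ncard_setOf_mem_and_add_mem f Set.univ U

/-- The random set is the preimage of `U` under a random translate of a random map `f φ : V → W`. -/
theorem hasCapSieve_of_hash {R V : Type*} [CommRing R] [AddCommGroup V] [Module R V] {τ : R}
    {Φ W : Type} [Finite Φ] [Nonempty Φ] [Finite W] [AddGroup W] (f : Φ → V → W) (U : Set W)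
    {c ρ : ℝ} (hc : c ≤ ρ) (hρ : ρ ≤ 1 / 2) (hU : ρ ≤ (U.ncard / Nat.card W : ℝ) ^ 3)
    (E : V → Set Φ) (hE : ∀ w ≠ 0, ((E w).ncard : ℝ) ≤ ρ * Nat.card Φ)
    (hf : ∀ x y z, x + τ • y = (1 + τ) • z → ∀ φ s,
      f φ x + s ∈ U → f φ y + s ∈ U → f φ z + s ∈ U → φ ∈ E (y - z)) :
    HasCapSieve τ V c := by
  have hW : (0 : ℝ) < Nat.card W := mod_cast Nat.card_pos
  refine ⟨Φ × W, inferInstance, inferInstance, fun ω => {v | f ω.1 v + ω.2 ∈ U},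
    U.ncard / Nat.card W, ρ, hc, hρ, by positivity, hU, fun x => le_of_eq ?_,
    fun x y z hxyz hyz => ?_⟩
  · simp only [Set.mem_ofPred_eq, ncard_setOf_add_mem fun φ => f φ x, Nat.card_prod]
    push_cast
    field_simp
  · have h := ncard_setOf_mem_and_add_mem (fun φ => f φ y) (E (y - z)) U
    have hsub : {ω : Φ × W | f ω.1 x + ω.2 ∈ U ∧ f ω.1 y + ω.2 ∈ U ∧ f ω.1 z + ω.2 ∈ U} ⊆
        {ω | ω.1 ∈ E (y - z) ∧ f ω.1 y + ω.2 ∈ U} := fun ω hω =>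
      ⟨hf x y z hxyz _ _ hω.1 hω.2.1 hω.2.2, hω.2.1⟩
    calc _ ≤ (({ω : Φ × W | ω.1 ∈ E (y - z) ∧ f ω.1 y + ω.2 ∈ U}.ncard : ℕ) : ℝ) :=
          mod_cast Set.ncard_le_ncard hsub
      _ = (E (y - z)).ncard * U.ncard := by rw [h, Nat.cast_mul]
      _ ≤ ρ * Nat.card Φ * U.ncard := by gcongr; exact hE _ (sub_ne_zero.2 hyz)
      _ = _ := by
        rw [Nat.card_prod]
        push_cast
        field_simp

end RandomTranslates

section Parseval

theorem addChar_sum_eq_prod {A R ι : Type*} [AddCommMonoid A] [CommMonoid R] (ψ : AddChar A R)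
    (s : Finset ι) (f : ι → A) : ψ (∑ i ∈ s, f i) = ∏ i ∈ s, ψ (f i) :=
  map_prod ψ.toMonoidHom (fun i => Multiplicative.ofAdd (f i)) s

variable {p : ℕ} [Fact p.Prime] {V : Type*} [AddCommGroup V] [Module (ZMod p) V]

open ZMod (stdAddChar)

theorem sum_stdAddChar_dual_eq_zero [Fintype (Module.Dual (ZMod p) V)] {v : V} (hv : v ≠ 0) :
    ∑ χ : Module.Dual (ZMod p) V, stdAddChar (χ v) = 0 := by
  obtain ⟨f, hf⟩ : ∃ f : Module.Dual (ZMod p) V, f v ≠ 0 := by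
    by_contra! h
    exact hv ((Module.forall_dual_apply_eq_zero_iff (ZMod p) v).1 h)
  let ψ := (stdAddChar (N := p)).compAddMonoidHom
    (LinearMap.applyₗ v : Module.Dual (ZMod p) V →ₗ[ZMod p] ZMod p).toAddMonoidHom
  refine (AddChar.sum_eq_zero_iff_ne_zero (ψ := ψ)).2 fun h0 => hf ?_
  exact ZMod.injective_stdAddChar
    ((DFunLike.congr_fun h0 f).trans (AddChar.map_zero_eq_one _).symm)

theorem sum_norm_sum_stdAddChar_sq [Fintype (Module.Dual (ZMod p) V)] {ι : Type*} [Fintype ι]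
    {u : ι → V} (hu : Function.Injective u) :
    ∑ χ : Module.Dual (ZMod p) V, ‖∑ j, stdAddChar (χ (u j))‖ ^ 2 =
      (Nat.card (Module.Dual (ZMod p) V) * Nat.card ι : ℝ) := by
  classical
  have hexpand : ∀ χ : Module.Dual (ZMod p) V,
      ((‖∑ j, stdAddChar (χ (u j))‖ ^ 2 : ℝ) : ℂ) =
        ∑ j, ∑ j', stdAddChar (χ (u j - u j')) := by
    intro χ
    rw [← Complex.normSq_eq_norm_sq, ← Complex.mul_conj, map_sum, Finset.sum_mul_sum]
    refine Finset.sum_congr rfl fun j _ => Finset.sum_congr rfl fun j' _ => ?_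
    rw [← AddChar.map_neg_eq_conj, ← AddChar.map_add_eq_mul, map_sub, sub_eq_add_neg]
  have hdiag : ∀ j, ∑ χ : Module.Dual (ZMod p) V, ∑ j', stdAddChar (χ (u j - u j')) =
      (Nat.card (Module.Dual (ZMod p) V) : ℂ) := by
    intro j
    rw [Finset.sum_comm, Finset.sum_eq_single j _ (by simp)]
    · simp
    · exact fun j' _ hj => sum_stdAddChar_dual_eq_zero (sub_ne_zero.2 fun h => hj (hu h).symm)
  rw [← Complex.ofReal_inj, Complex.ofReal_sum]
  simp only [hexpand]
  rw [Finset.sum_comm, Finset.sum_congr rfl fun j _ => hdiag j]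
  simp [mul_comm]

end Parseval

section Hashing

/-- The exponential sum `∑ e(j u / p)` over `0 ≤ j < M`, which is large if `u` is close to `0`. -/
noncomputable def expSum {p : ℕ} [NeZero p] (M : ℕ) (u : ZMod p) : ℂ :=
  ∑ j : Fin M, ZMod.stdAddChar (((j : ℕ) : ZMod p) * u)

/-- Cells in `ℤ / p`, all of size `b`, labelled by digits modulo `M`, such that integral linear
forms of height at most `H` pass from elements of cells to their labels. Differences within a cell
are small, as measured by `expSum`; the cells cover `ℤ / p` up to the factor `K g`. -/
structure IsCellSystem {p : ℕ} [NeZero p] (M H b : ℕ) (K g : ℝ)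
    (cell : ZMod M → Finset (ZMod p)) : Prop where
  card_eq : ∀ c, (cell c).card = b
  sum_label_eq_zero : ∀ (ι : Type) [Fintype ι] (α : ι → ℤ) (u : ι → ZMod p) (c : ι → ZMod M),
    ∑ r, |α r| ≤ (H : ℤ) → (∀ r, u r ∈ cell (c r)) → ∑ r, (α r : ZMod p) * u r = 0 →
      ∑ r, (α r : ZMod M) * c r = 0
  le_norm_expSum_sq : ∀ c, ∀ u ∈ cell c, ∀ u' ∈ cell c,
    g * (M : ℝ) ^ 2 ≤ ‖expSum M (u - u')‖ ^ 2
  size_le : (p : ℝ) ^ 3 ≤ K * g * (M * b : ℝ) ^ 3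

/-- The value at `τ` of the polynomial with integer coefficients `α`. -/
def intEval {F : Type*} [Field F] {k : ℕ} (τ : F) (α : Fin k → ℤ) : F :=
  ∑ i, (α i : F) * τ ^ (i : ℕ)

/-- No nonzero integer polynomial of degree less than `k` with coefficients less than `M` in
absolute value vanishes at `τ`. -/
def NoSmallRelation {F : Type*} [Field F] (τ : F) (k M : ℕ) : Prop :=
  ∀ α : Fin k → ℤ, (∀ i, |α i| < (M : ℤ)) → intEval τ α = 0 → α = 0

/-- What survives of the equation `x + τ y = (1 + τ) z` after hashing `v` to the digits of
`χ (τ ^ i v)`, `i < k`: the integral linear relations of height at most `H` between the powers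
of `τ`. -/
def SatisfiesDigitRelations {F : Type*} [Field F] (τ : F) {m k M : ℕ} (H : ℕ)
    (x y z : Fin m → Fin k → ZMod M) : Prop :=
  ∀ α β : Fin k → ℤ, ∑ i, (|α i| + |β i| + |α i + β i|) ≤ (H : ℤ) →
    intEval τ β = τ * intEval τ α →
    ∀ j, ∑ i, ((α i : ZMod M) * x j i + (β i : ZMod M) * y j i
      - ((α i : ZMod M) + (β i : ZMod M)) * z j i) = 0

/-- The analogue of a cap for digit vectors, with the equation replaced by the relations which
survive the hashing. -/
def IsDigitCap {F : Type*} [Field F] (τ : F) {m k M : ℕ} (H : ℕ)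
    (C : Set (Fin m → Fin k → ZMod M)) : Prop :=
  ∀ x ∈ C, ∀ y ∈ C, ∀ z ∈ C, SatisfiesDigitRelations τ H x y z → y = z

variable {p : ℕ} [Fact p.Prime] {F V : Type*} [Field F] [AddCommGroup V] [Module F V] {τ : F}

theorem NoSmallRelation.injective_sum_smul {k M : ℕ} (hτ : NoSmallRelation τ k M) {w : V}
    (hw : w ≠ 0) :
    Function.Injective fun j : Fin k → Fin M => ∑ i, (j i : ℕ) • τ ^ (i : ℕ) • w := by
  intro j j' h
  let α : Fin k → ℤ := fun i => (j i : ℕ) - (j' i : ℕ)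
  have hα : intEval τ α • w = 0 := by
    rw [← sub_eq_zero.2 h, intEval, Finset.sum_smul, ← Finset.sum_sub_distrib]
    refine Finset.sum_congr rfl fun i _ => ?_
    simp only [α, ← Nat.cast_smul_eq_nsmul F]
    push_cast
    module
  have hzero := hτ α (fun i => by have := (j i).2; have := (j' i).2; grind)
    ((smul_eq_zero.1 hα).resolve_right hw)
  funext i
  have : ((j i : ℕ) : ℤ) - (j' i : ℕ) = 0 := congrFun hzero i
  exact Fin.ext (by lia)

/-- The functionals for which all of `χ (τ ^ i w)`, `i < k`, are close to `0`. -/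
def smallDual (p : ℕ) [Fact p.Prime] [Module (ZMod p) V] (τ : F) (k M : ℕ) (g : ℝ) (w : V) :
    Set (Module.Dual (ZMod p) V) :=
  {χ | ∀ i : Fin k, g * (M : ℝ) ^ 2 ≤ ‖expSum M (χ (τ ^ (i : ℕ) • w))‖ ^ 2}

theorem sum_stdAddChar_dual_eq_prod_expSum [Module (ZMod p) V] (χ : Module.Dual (ZMod p) V)
    {k : ℕ} (M : ℕ) (v : Fin k → V) :
    ∑ j : Fin k → Fin M, ZMod.stdAddChar (χ (∑ i, (j i : ℕ) • v i)) =
      ∏ i, expSum M (χ (v i)) := by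
  simp only [expSum, Finset.prod_univ_sum, Fintype.piFinset_univ, ← addChar_sum_eq_prod,
    map_sum, map_nsmul, nsmul_eq_mul]

/-- Parseval over the `M ^ k` distinct combinations `∑ jᵢ τ ^ i w` with `0 ≤ jᵢ < M`: a functional
in `smallDual` has a large exponential sum over them. -/
theorem ncard_smallDual_mul_le [Module (ZMod p) V] [Finite (Module.Dual (ZMod p) V)] {k M : ℕ}
    (hM : 0 < M) (hτ : NoSmallRelation τ k M) {g : ℝ} (hg : 0 < g) {w : V} (hw : w ≠ 0) :
    ((smallDual p τ k M g w).ncard : ℝ) * (g * M) ^ k ≤ Nat.card (Module.Dual (ZMod p) V) := by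
  have := Fintype.ofFinite (Module.Dual (ZMod p) V)
  let S := (Set.toFinite (smallDual p τ k M g w)).toFinset
  let u : (Fin k → Fin M) → V := fun j => ∑ i, (j i : ℕ) • τ ^ (i : ℕ) • w
  have hlarge : ∀ χ ∈ S, (g * (M : ℝ) ^ 2) ^ k ≤ ‖∑ j, ZMod.stdAddChar (χ (u j))‖ ^ 2 := by
    intro χ hχ
    have hχ : χ ∈ smallDual p τ k M g w := (Set.Finite.mem_toFinset _).1 hχ
    rw [sum_stdAddChar_dual_eq_prod_expSum, norm_prod, ← Finset.prod_pow]
    exact (Fin.prod_const k _).symm.trans_le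
      (Finset.prod_le_prod (fun _ _ => by positivity) fun i _ => hχ i)
  have hsum : ((smallDual p τ k M g w).ncard : ℝ) * (g * (M : ℝ) ^ 2) ^ k ≤
      Nat.card (Module.Dual (ZMod p) V) * (M : ℝ) ^ k :=
    calc _ = S.card • (g * (M : ℝ) ^ 2) ^ k := by
          rw [Set.ncard_eq_toFinset_card _, nsmul_eq_mul]
      _ ≤ ∑ χ ∈ S, ‖∑ j, ZMod.stdAddChar (χ (u j))‖ ^ 2 :=
          Finset.card_nsmul_le_sum _ _ _ hlarge
      _ ≤ ∑ χ : Module.Dual (ZMod p) V, ‖∑ j, ZMod.stdAddChar (χ (u j))‖ ^ 2 :=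
          Finset.sum_le_sum_of_subset_of_nonneg (Finset.subset_univ _) fun _ _ _ => sq_nonneg _
      _ = _ := by
          rw [sum_norm_sum_stdAddChar_sq (hτ.injective_sum_smul hw)]
          simp
  refine le_of_mul_le_mul_right (le_of_eq_of_le ?_ hsum) (show (0 : ℝ) < M ^ k by positivity)
  rw [mul_assoc, ← mul_pow]
  ring_nf

/-- The entries are the values of the functionals `χ j` at `τ ^ i v`. -/
def powerHash [Module (ZMod p) V] (τ : F) {m k : ℕ} (χ : Fin m → Module.Dual (ZMod p) V) (v : V) :
    Fin m → Fin k → ZMod p :=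
  fun j i => χ j (τ ^ (i : ℕ) • v)

/-- The vectors all of whose entries lie in the cells labelled by some element of `C`. -/
def cellUnion {m k M : ℕ} (cell : ZMod M → Finset (ZMod p))
    (C : Set (Fin m → Fin k → ZMod M)) : Set (Fin m → Fin k → ZMod p) :=
  {t | ∃ c ∈ C, ∀ j i, t j i ∈ cell (c j i)}

variable {M H b : ℕ} {K g : ℝ} {cell : ZMod M → Finset (ZMod p)}

theorem IsCellSystem.label_unique (hcell : IsCellSystem M H b K g cell) (hH : 2 ≤ H)
    {c c' : ZMod M} {u : ZMod p} (hc : u ∈ cell c) (hc' : u ∈ cell c') : c = c' := by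
  have h := hcell.sum_label_eq_zero (Fin 2) ![1, -1] ![u, u] ![c, c'] (by simpa using hH)
    (by simp [Fin.forall_fin_two, hc, hc']) (by simp)
  simpa [sub_eq_zero, ← sub_eq_add_neg] using h

theorem IsCellSystem.ncard_cellUnion [NeZero M] (hcell : IsCellSystem M H b K g cell)
    (hH : 2 ≤ H) {m k : ℕ} (C : Set (Fin m → Fin k → ZMod M)) :
    (cellUnion cell C).ncard = C.ncard * b ^ (k * m) := by
  classical
  have hunion : cellUnion cell C = (C.toFinset.biUnion fun c =>
      Fintype.piFinset fun j => Fintype.piFinset fun i => cell (c j i) : Finset _) := by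
    ext t
    simp [cellUnion]
  rw [hunion, Set.ncard_coe_finset, Finset.card_biUnion, Set.ncard_eq_toFinset_card']
  · simp [Fintype.card_piFinset, hcell.card_eq, pow_mul]
  · intro c _ c' _ hne
    refine Finset.disjoint_left.2 fun t ht ht' => hne ?_
    simp only [Fintype.mem_piFinset] at ht ht'
    exact funext fun j => funext fun i => hcell.label_unique hH (ht j i) (ht' j i)

theorem sum_dual_eq_zero [Module (ZMod p) V] {k : ℕ} {α β : Fin k → ℤ}
    (hαβ : intEval τ β = τ * intEval τ α) {x y z : V} (hxyz : x + τ • y = (1 + τ) • z)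
    (χ : Module.Dual (ZMod p) V) :
    ∑ i, ((α i : ZMod p) * χ (τ ^ (i : ℕ) • x) + (β i : ZMod p) * χ (τ ^ (i : ℕ) • y)
      - ((α i : ZMod p) + (β i : ZMod p)) * χ (τ ^ (i : ℕ) • z)) = 0 := by
  have hχ : ∀ (γ : Fin k → ℤ) (v : V),
      χ (intEval τ γ • v) = ∑ i, (γ i : ZMod p) * χ (τ ^ (i : ℕ) • v) := by
    intro γ v
    simp only [intEval, Finset.sum_smul, map_sum, mul_smul, Int.cast_smul_eq_zsmul, map_zsmul,
      zsmul_eq_mul]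
  have hV : intEval τ α • x + intEval τ β • y - (intEval τ α + intEval τ β) • z = 0 := by
    rw [← smul_zero (intEval τ α), ← sub_eq_zero.2 hxyz, hαβ]
    module
  have h := congrArg χ hV
  rw [add_smul, map_sub, map_add, map_add, hχ, hχ, hχ, hχ, map_zero] at h
  simp only [add_mul, Finset.sum_sub_distrib, Finset.sum_add_distrib]
  exact h

theorem IsCellSystem.sum_label_eq_zero_of_sum_eq_zero (hcell : IsCellSystem M H b K g cell)
    {k : ℕ} {α β : Fin k → ℤ} (hH : ∑ i, (|α i| + |β i| + |α i + β i|) ≤ (H : ℤ))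
    {x y z : Fin k → ZMod p} {cx cy cz : Fin k → ZMod M} (hx : ∀ i, x i ∈ cell (cx i))
    (hy : ∀ i, y i ∈ cell (cy i)) (hz : ∀ i, z i ∈ cell (cz i))
    (h : ∑ i, ((α i : ZMod p) * x i + (β i : ZMod p) * y i
      - ((α i : ZMod p) + (β i : ZMod p)) * z i) = 0) :
    ∑ i, ((α i : ZMod M) * cx i + (β i : ZMod M) * cy i
      - ((α i : ZMod M) + (β i : ZMod M)) * cz i) = 0 := by
  have hlabel := hcell.sum_label_eq_zero (Fin k ⊕ Fin k ⊕ Fin k)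
    (Sum.elim α (Sum.elim β fun i => -(α i + β i))) (Sum.elim x (Sum.elim y z))
    (Sum.elim cx (Sum.elim cy cz))
    (by simpa [Finset.sum_add_distrib, add_assoc, -neg_add_rev] using hH)
    (by rintro (i | i | i); exacts [hx i, hy i, hz i])
    (by
      rw [← h]
      simp [Finset.sum_add_distrib, Finset.sum_sub_distrib, -neg_add_rev]
      ring)
  rw [← hlabel]
  simp [Finset.sum_add_distrib, Finset.sum_sub_distrib, -neg_add_rev]
  ring

theorem mem_smallDual_of_hash_mem_cellUnion [Module (ZMod p) V]
    (hcell : IsCellSystem M H b K g cell) {m k : ℕ} {C : Set (Fin m → Fin k → ZMod M)}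
    (hC : IsDigitCap τ H C) {x y z : V} (hxyz : x + τ • y = (1 + τ) • z)
    (χ : Fin m → Module.Dual (ZMod p) V) (s : Fin m → Fin k → ZMod p)
    (hx : powerHash τ χ x + s ∈ cellUnion cell C)
    (hy : powerHash τ χ y + s ∈ cellUnion cell C)
    (hz : powerHash τ χ z + s ∈ cellUnion cell C) (j : Fin m) :
    χ j ∈ smallDual p τ k M g (y - z) := by
  obtain ⟨cx, hcx, hx⟩ := hx
  obtain ⟨cy, hcy, hy⟩ := hy
  obtain ⟨cz, hcz, hz⟩ := hz
  have hlabels : cy = cz := hC cx hcx cy hcy cz hcz fun α β hH hαβ j => by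
    refine hcell.sum_label_eq_zero_of_sum_eq_zero hH (hx j) (hy j) (hz j) ?_
    rw [← sum_dual_eq_zero hαβ hxyz (χ j)]
    refine Finset.sum_congr rfl fun i _ => ?_
    simp only [powerHash, Pi.add_apply]
    ring
  intro i
  have h := hcell.le_norm_expSum_sq (cy j i) _ (hy j i) _ (hlabels ▸ hz j i)
  simpa only [powerHash, Pi.add_apply, add_sub_add_right_eq_sub, ← map_sub, ← smul_sub] using h

theorem IsCellSystem.inv_pow_le (hcell : IsCellSystem M H b K g cell) (hg : 0 < g)
    (hM : 0 < M) (hK : 0 < K) {N : ℕ} {C : ℝ} (hC : K ^ N * (M : ℝ) ^ (2 * N) ≤ C ^ 3) :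
    ((g * M) ^ N)⁻¹ ≤ (C * b ^ N / p ^ N : ℝ) ^ 3 := by
  have hp : 0 < p := (Fact.out : p.Prime).pos
  have hone : 1 ≤ K * g * M ^ 3 * ((b : ℝ) ^ 3 / p ^ 3) := by
    rw [mul_div_assoc', le_div_iff₀ (by positivity), one_mul]
    exact hcell.size_le.trans_eq (by ring)
  calc ((g * (M : ℝ)) ^ N)⁻¹
      ≤ ((g * (M : ℝ)) ^ N)⁻¹ * (K * g * M ^ 3 * ((b : ℝ) ^ 3 / p ^ 3)) ^ N :=
        le_mul_of_one_le_right (by positivity) (one_le_pow₀ hone)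
    _ = K ^ N * (M : ℝ) ^ (2 * N) * ((b : ℝ) ^ 3 / p ^ 3) ^ N := by
        rw [pow_mul (M : ℝ) 2, ← mul_pow, ← mul_pow, ← inv_pow, ← mul_pow]
        congr 1
        field_simp
    _ ≤ C ^ 3 * ((b : ℝ) ^ 3 / p ^ 3) ^ N := by gcongr
    _ = _ := by rw [div_pow, div_pow, mul_pow]; ring

theorem hasCapSieve_of_isDigitCap {V : Type} [AddCommGroup V] [Module F V]
    [Finite V] [CharP F p] [NeZero M]
    (hcell : IsCellSystem M H b K g cell) (hH : 2 ≤ H) (hg : 0 < g) (hg1 : g ≤ 1)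
    (hgM : 2 ≤ g * M) (hK : 0 < K) {m k : ℕ} (hk : 0 < k) (hm : 0 < m)
    (hτ : NoSmallRelation τ k M) {C : Set (Fin m → Fin k → ZMod M)} (hC : IsDigitCap τ H C)
    (hsize : K ^ (k * m) * (M : ℝ) ^ (2 * (k * m)) ≤ (C.ncard : ℝ) ^ 3) :
    HasCapSieve τ V ((M : ℝ) ^ (k * m))⁻¹ := by
  let _ : Module (ZMod p) V := Module.compHom V (ZMod.castHom dvd_rfl F)
  have : Finite (Module.Dual (ZMod p) V) := Finite.of_injective _ DFunLike.coe_injective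
  have hM : 0 < M := NeZero.pos M
  refine hasCapSieve_of_hash (Φ := Fin m → Module.Dual (ZMod p) V) (ρ := ((g * M) ^ (k * m))⁻¹)
    (powerHash τ) (cellUnion cell C) ?_ ?_ ?_ (fun w => {χ | ∀ j, χ j ∈ smallDual p τ k M g w})
    (fun w hw => ?_) fun x y z hxyz χ s hx hy hz j =>
      mem_smallDual_of_hash_mem_cellUnion hcell hC hxyz χ s hx hy hz j
  · gcongr
    nlinarith
  · rw [one_div]
    exact inv_anti₀ two_pos (hgM.trans (le_self_pow₀ (by linarith) (by positivity)))
  · convert hcell.inv_pow_le hg hM hK hsize using 3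
    · rw [hcell.ncard_cellUnion hH, Nat.cast_mul, Nat.cast_pow]
    · simp [pow_mul]
  · have h := ncard_smallDual_mul_le (p := p) hM hτ hg hw
    rw [ncard_setOf_forall, Nat.card_fun, Nat.card_fin, ← div_eq_inv_mul,
      le_div_iff₀ (by positivity), pow_mul]
    push_cast
    rw [← mul_pow]
    gcongr

end Hashing


section Cells

variable {p : ℕ} [Fact p.Prime]

theorem isCellSystem_singleton (H : ℕ) :
    IsCellSystem p H 1 1 1 (fun c : ZMod p => {c}) where
  card_eq := by simp
  sum_label_eq_zero ι _ α u c _ hu h := by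
    obtain rfl : u = c := funext fun r => Finset.mem_singleton.1 (hu r)
    exact h
  le_norm_expSum_sq c u hu u' hu' := by
    obtain rfl := Finset.mem_singleton.1 hu
    obtain rfl := Finset.mem_singleton.1 hu'
    simp [expSum]
  size_le := by simp

/-- The `b` residues that follow `c p / M`, so that `arc p b` is a cell system with labels modulo
`M` approximating the map `u ↦ M u / p`. -/
def arc (p : ℕ) {M : ℕ} (b : ℕ) (c : ZMod M) : Finset (ZMod p) :=
  (Finset.range b).image fun i => ((c.val * p / M + i : ℕ) : ZMod p)

theorem card_arc {M b : ℕ} (hb : b ≤ p) (c : ZMod M) : (arc p b c).card = b := by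
  refine (Finset.card_image_of_injOn fun i hi i' hi' h => ?_).trans (Finset.card_range b)
  simp only [Finset.coe_range, Set.mem_Iio] at hi hi'
  simp only [Nat.cast_add, add_right_inj, ZMod.natCast_eq_natCast_iff'] at h
  rwa [Nat.mod_eq_of_lt (by lia), Nat.mod_eq_of_lt (by lia)] at h

theorem exists_intCast_eq_of_mem_arc {M b : ℕ} [NeZero M] {c : ZMod M} {u : ZMod p}
    (hu : u ∈ arc p b c) : ∃ n : ℤ, n = u ∧ |p * (c.val : ℤ) - M * n| ≤ M * b := by
  obtain ⟨i, hi, rfl⟩ := Finset.mem_image.1 hu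
  refine ⟨(c.val * p / M + i : ℕ), Int.cast_natCast _, ?_⟩
  have hdiv : (M : ℤ) * ((c.val * p / M : ℕ) : ℤ) + ((c.val * p % M : ℕ) : ℤ) = c.val * p := by
    exact_mod_cast Nat.div_add_mod (c.val * p) M
  have hrem : ((c.val * p % M : ℕ) : ℤ) < M := by
    exact_mod_cast Nat.mod_lt _ (NeZero.pos M)
  have hib : (i : ℤ) + 1 ≤ b := by exact_mod_cast Finset.mem_range.1 hi
  have hMi : (M : ℤ) * i + M ≤ M * b := by nlinarith
  rw [Nat.cast_add, abs_le]
  constructor <;> nlinarith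

theorem sum_label_eq_zero_of_mem_arc {M b H : ℕ} [NeZero M] (hb : H * (M * b) < p) {ι : Type*}
    [Fintype ι] {α : ι → ℤ} {u : ι → ZMod p} {c : ι → ZMod M} (hα : ∑ r, |α r| ≤ (H : ℤ))
    (hu : ∀ r, u r ∈ arc p b (c r)) (h : ∑ r, (α r : ZMod p) * u r = 0) :
    ∑ r, (α r : ZMod M) * c r = 0 := by
  choose n hnu hn using fun r => exists_intCast_eq_of_mem_arc (hu r)
  have hdvd : (p : ℤ) ∣ ∑ r, α r * n r := by
    rw [← ZMod.intCast_zmod_eq_zero_iff_dvd, Int.cast_sum, ← h]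
    simp only [Int.cast_mul, hnu]
  have herr : ∑ r, α r * (p * (c r).val - M * n r) =
      p * ∑ r, α r * (c r).val - M * ∑ r, α r * n r := by
    rw [Finset.mul_sum, Finset.mul_sum, ← Finset.sum_sub_distrib]
    exact Finset.sum_congr rfl fun r _ => by ring
  have hlt : |∑ r, α r * (p * (c r).val - M * n r)| < p :=
    calc |∑ r, α r * (p * (c r).val - M * n r)|
        ≤ ∑ r, |α r| * (M * b : ℤ) := (Finset.abs_sum_le_sum_abs _ _).trans
          (Finset.sum_le_sum fun r _ => by rw [abs_mul]; gcongr; exact hn r)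
      _ ≤ H * (M * b : ℤ) := by rw [← Finset.sum_mul]; gcongr
      _ < p := by exact_mod_cast hb
  have hzero := Int.eq_zero_of_abs_lt_dvd
    (herr ▸ dvd_sub (dvd_mul_right _ _) (hdvd.mul_left _)) hlt
  obtain ⟨t, ht⟩ := hdvd
  have hp : (p : ℤ) ≠ 0 := by exact_mod_cast (Fact.out : p.Prime).ne_zero
  have hlabel : ∑ r, α r * ((c r).val : ℤ) = M * t := by
    refine mul_left_cancel₀ hp ?_
    linear_combination hzero - herr + M * ht
  simpa using congrArg (Int.cast : ℤ → ZMod M) hlabel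

theorem half_le_re_stdAddChar {n : ℤ} (hn : 7 * |n| ≤ p) :
    1 / 2 ≤ (ZMod.stdAddChar (n : ZMod p)).re := by
  have hp : (0 : ℝ) < p := by exact_mod_cast (Fact.out : p.Prime).pos
  have hangle : 2 * (Real.pi : ℂ) * Complex.I * n / p =
      ((2 * Real.pi * n / p : ℝ) : ℂ) * Complex.I := by
    push_cast
    ring
  have hsmall : |2 * Real.pi * n / p| ≤ 1 := by
    have hn : 7 * |(n : ℝ)| ≤ p := by exact_mod_cast hn
    rw [abs_div, abs_mul, abs_of_pos hp, abs_of_pos Real.two_pi_pos, div_le_one hp]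
    nlinarith [abs_nonneg (n : ℝ), Real.pi_lt_d2]
  have hsq := (sq_le_one_iff_abs_le_one _).2 hsmall
  rw [ZMod.stdAddChar_coe, hangle, Complex.exp_ofReal_mul_I_re]
  exact le_trans (by linarith) Real.one_sub_sq_div_two_le_cos

theorem half_le_norm_expSum {M : ℕ} {n : ℤ} (hn : 7 * (M * |n|) ≤ p) :
    (M : ℝ) / 2 ≤ ‖expSum M (n : ZMod p)‖ := by
  have hterm : ∀ j : Fin M,
      1 / 2 ≤ (ZMod.stdAddChar (((j : ℕ) : ZMod p) * (n : ZMod p))).re := by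
    intro j
    have hj : |((j : ℕ) : ℤ) * n| ≤ M * |n| := by
      rw [abs_mul, Nat.abs_cast]
      gcongr
      exact j.2.le
    simpa using half_le_re_stdAddChar (p := p) (n := ((j : ℕ) : ℤ) * n) (by linarith)
  refine le_trans ?_ (Complex.re_le_norm _)
  rw [expSum, Complex.re_sum]
  simpa [div_eq_mul_inv] using Finset.card_nsmul_le_sum Finset.univ _ _ fun j _ => hterm j

theorem isCellSystem_arc {M H : ℕ} (hM : 0 < M) (hp : M * (H + 7) ≤ p) :
    IsCellSystem M H (p / (M * (H + 7))) (4 * (2 * (H + 7)) ^ 3) (1 / 4)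
      (arc p (p / (M * (H + 7)))) := by
  have : NeZero M := ⟨hM.ne'⟩
  set b := p / (M * (H + 7))
  have hb_pos : 0 < b := Nat.div_pos hp (by positivity)
  have hle : M * (H + 7) * b ≤ p := Nat.mul_div_le p _
  have hlt : p < M * (H + 7) * (b + 1) := Nat.lt_mul_div_succ p (by positivity)
  refine ⟨card_arc (Nat.div_le_self _ _), fun ι _ α u c => sum_label_eq_zero_of_mem_arc ?_,
    fun c u hu u' hu' => ?_, ?_⟩
  · have : 0 < M * b := by positivity
    nlinarith
  · obtain ⟨i, hi, rfl⟩ := Finset.mem_image.1 hu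
    obtain ⟨i', hi', rfl⟩ := Finset.mem_image.1 hu'
    have hdiff : |(i : ℤ) - i'| ≤ b := by
      have := Finset.mem_range.1 hi
      have := Finset.mem_range.1 hi'
      rw [abs_le]
      lia
    have hsmall : 7 * (M * |(i : ℤ) - i'|) ≤ p :=
      calc (7 * (M * |(i : ℤ) - i'|) : ℤ) ≤ 7 * (M * b) := by gcongr
        _ ≤ M * (H + 7) * b := by nlinarith [(by positivity : (0 : ℤ) ≤ H * (M * b))]
        _ ≤ p := by exact_mod_cast hle
    have hnorm := half_le_norm_expSum (M := M) hsmall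
    rw [show (1 : ℝ) / 4 * (M : ℝ) ^ 2 = (M / 2) ^ 2 by ring]
    exact pow_le_pow_left₀ (by positivity) (by simpa using hnorm) 2
  · have hcover : (p : ℝ) ≤ 2 * (H + 7) * (M * b) := by
      have : p ≤ 2 * (H + 7) * (M * b) := by nlinarith
      exact_mod_cast this
    exact (pow_le_pow_left₀ (by positivity) hcover 3).trans_eq (by ring)

end Cells

section BlockConstruction

variable {W : Type*}

/-- The vectors with one entry equal to `w` and all other entries in `C`. Admitting any position
for `w` enlarges the power of a cap `C` without creating many solutions. -/
def blockSet (r : ℕ) (w : W) (C : Set W) : Set (Fin (r + 1) → W) :=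
  (fun t : Fin (r + 1) × (Fin r → W) => t.1.insertNth w t.2) '' (Set.univ ×ˢ {c | ∀ s, c s ∈ C})

theorem ncard_blockSet (r : ℕ) {w : W} {C : Set W} (hw : w ∉ C) :
    (blockSet r w C).ncard = (r + 1) * C.ncard ^ r := by
  rw [blockSet, Set.InjOn.ncard_image, Set.ncard_prod, ncard_setOf_forall]
  · simp
  · rintro ⟨i, c⟩ ⟨-, hc⟩ ⟨i', c'⟩ - h
    obtain rfl : i = i' := by
      by_contra hne
      obtain ⟨s, hs⟩ := Fin.exists_succAbove_eq (Ne.symm hne)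
      have h := congrFun h i'
      simp only [← hs, Fin.insertNth_apply_succAbove, Fin.insertNth_apply_same] at h
      exact hw (h ▸ hc s)
    exact congrArg (Prod.mk i) (Fin.insertNth_right_injective (α := fun _ => W) w h)

theorem exists_forall_ne_mem_of_mem_blockSet {r : ℕ} {w : W} {C : Set W} {u : Fin (r + 1) → W}
    (hu : u ∈ blockSet r w C) : ∃ i, ∀ s ≠ i, u s ∈ C := by
  obtain ⟨⟨i, c⟩, ⟨-, hc⟩, rfl⟩ := hu
  refine ⟨i, fun s hs => ?_⟩
  obtain ⟨s, rfl⟩ := Fin.exists_succAbove_eq hs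
  simpa using hc s

/-- The entries `y` and `z` of a solution agree except at the at most three exceptional positions,
one of which is determined by `z`. -/
theorem ncard_capSolutions_blockSet_le {R : Type*} [CommRing R] [AddCommGroup W] [Module R W]
    [Finite W] {τ : R} {C : Set W} (hC : IsCap τ C) (r : ℕ) (w : W) :
    (capSolutions τ (blockSet r w C)).ncard ≤
      (r + 1) ^ 2 * Nat.card W ^ 3 * (blockSet r w C).ncard := by
  classical
  choose! l hl using fun z (hz : z ∈ blockSet r w C) => exists_forall_ne_mem_of_mem_blockSet hz
  let y (i j : Fin (r + 1)) (a b c : W) (z : Fin (r + 1) → W) : Fin (r + 1) → W :=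
    Function.update (Function.update (Function.update z i a) j b) (l z) c
  let D : Set ((Fin (r + 1) × Fin (r + 1) × W × W × W) × (Fin (r + 1) → W)) :=
    Set.univ ×ˢ blockSet r w C
  let Ψ (t : (Fin (r + 1) × Fin (r + 1) × W × W × W) × (Fin (r + 1) → W)) :=
    y t.1.1 t.1.2.1 t.1.2.2.1 t.1.2.2.2.1 t.1.2.2.2.2 t.2
  have hsub : capSolutions τ (blockSet r w C) ⊆
      (fun t => ((1 + τ) • t.2 - τ • Ψ t, Ψ t, t.2)) '' D := by
    rintro ⟨x, y', z⟩ ⟨hx, hy, hz, hxyz⟩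
    obtain ⟨i, hi⟩ := exists_forall_ne_mem_of_mem_blockSet hx
    obtain ⟨j, hj⟩ := exists_forall_ne_mem_of_mem_blockSet hy
    have hagree : y i j (y' i) (y' j) (y' (l z)) z = y' := by
      funext s
      simp only [y, Function.update_apply]
      split_ifs with h₁ h₂ h₃
      · rw [h₁]
      · rw [h₂]
      · rw [h₃]
      · exact (hC _ (hi s h₃) _ (hj s h₂) _ (hl z hz s h₁) (congrFun hxyz s)).symm
    refine ⟨((i, j, y' i, y' j, y' (l z)), z), ⟨Set.mem_univ _, hz⟩, ?_⟩
    simp only [Ψ, hagree, ← show x + τ • y' = (1 + τ) • z from hxyz, add_sub_cancel_right]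
  refine (Set.ncard_le_ncard hsub).trans ((Set.ncard_image_le).trans_eq ?_)
  simp only [D, Set.ncard_prod, Set.ncard_univ, Nat.card_prod, Nat.card_fin]
  ring

end BlockConstruction

section AffinePullback

variable {k V W : Type*} [Field k] [AddCommGroup V] [Module k V] [AddCommGroup W] [Module k W]

/-- A random affine map sends a nonconstant solution to a uniformly random solution. -/
theorem ncard_setOf_forall_apply_add_mem_mul_le [Finite W] [Finite (V →ₗ[k] W)] {τ : k}
    (U : Set W) {x y z : V} (hxyz : x + τ • y = (1 + τ) • z) (hyz : y ≠ z) :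
    {ω : (V →ₗ[k] W) × W | ω.1 x + ω.2 ∈ U ∧ ω.1 y + ω.2 ∈ U ∧ ω.1 z + ω.2 ∈ U}.ncard *
      Nat.card W ≤ (capSolutions τ U).ncard * Nat.card (V →ₗ[k] W) := by
  obtain ⟨f, hf⟩ := Module.Projective.exists_dual_eq_one k (sub_ne_zero.2 hyz)
  have hsol : ∀ φ : V →ₗ[k] W, ∀ s, φ x + s + τ • (φ y + s) = (1 + τ) • (φ z + s) := by
    intro φ s
    have h := congrArg φ hxyz
    rw [map_add, map_smul, map_smul] at h
    rw [smul_add (1 + τ), ← h]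
    module
  rw [← Set.ncard_univ W, ← Set.ncard_univ (V →ₗ[k] W), ← Set.ncard_prod, ← Set.ncard_prod]
  refine Set.ncard_le_ncard_of_injOn (fun t : ((V →ₗ[k] W) × W) × W =>
    ((t.1.1 x + t.1.2, t.1.1 y + t.1.2, t.1.1 z + t.1.2), t.1.1 + f.smulRight t.2)) ?_ ?_
  · rintro ⟨⟨φ, s⟩, u⟩ ⟨⟨hx, hy, hz⟩, -⟩
    exact ⟨⟨hx, hy, hz, hsol φ s⟩, trivial⟩
  · rintro ⟨⟨φ, s⟩, u⟩ - ⟨⟨φ', s'⟩, u'⟩ - h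
    simp only [Prod.mk.injEq] at h
    obtain ⟨⟨-, hy, hz⟩, hφ⟩ := h
    have hyz : φ (y - z) = φ' (y - z) := by
      rw [map_sub, map_sub, ← add_sub_add_right_eq_sub (φ y) _ s, hy, hz, add_sub_add_right_eq_sub]
    obtain rfl : u = u' := by simpa [hf, hyz] using LinearMap.congr_fun hφ (y - z)
    obtain rfl : φ = φ' := add_right_cancel hφ
    rw [add_left_cancel hz]

theorem ncard_capSolutions_univ_le {R : Type*} [CommRing R] (τ : R) (V : Type*) [AddCommGroup V]
    [Module R V] [Finite V] : (capSolutions τ (Set.univ : Set V)).ncard ≤ Nat.card V ^ 2 := by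
  rw [sq, ← Nat.card_prod, ← Set.ncard_univ]
  refine Set.ncard_le_ncard_of_injOn Prod.snd (fun _ _ => trivial) fun t ht t' ht' h => ?_
  refine Prod.ext (add_right_cancel (b := τ • t.2.1) ?_) h
  rw [ht.2.2.2, h, ht'.2.2.2]

theorem exists_isCap_of_affine_pullback [Finite V] [Finite W] (τ : k) (U : Set W) :
    ∃ I : Set V, IsCap τ I ∧ (U.ncard / Nat.card W * Nat.card V : ℝ) -
      (capSolutions τ U).ncard / Nat.card W ^ 2 * Nat.card V ^ 2 ≤ I.ncard := by
  have : Finite (V →ₗ[k] W) := Finite.of_injective _ DFunLike.coe_injective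
  let S (ω : (V →ₗ[k] W) × W) : Set V := {v | ω.1 v + ω.2 ∈ U}
  let T := (Set.toFinite (capSolutions τ (Set.univ : Set V) ∩ {t | t.2.1 ≠ t.2.2})).toFinset
  have hpoint : ∀ x, (U.ncard / Nat.card W : ℝ) * Nat.card ((V →ₗ[k] W) × W) ≤
      {ω | x ∈ S ω}.ncard := by
    intro x
    simp only [S, Set.mem_ofPred_eq, ncard_setOf_add_mem fun φ : V →ₗ[k] W => φ x, Nat.card_prod]
    push_cast
    have hW : (0 : ℝ) < Nat.card W := mod_cast Nat.card_pos
    exact le_of_eq (by field_simp)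
  have htriple : ∀ x y z, (x, y, z) ∈ T → ({ω | x ∈ S ω ∧ y ∈ S ω ∧ z ∈ S ω}.ncard : ℝ) ≤
      ((capSolutions τ U).ncard / Nat.card W ^ 2 : ℝ) * Nat.card ((V →ₗ[k] W) × W) := by
    intro x y z h
    obtain ⟨hsol, hyz⟩ := (Set.Finite.mem_toFinset _).1 h
    have h : (_ : ℝ) ≤ _ := Nat.cast_le.2 (ncard_setOf_forall_apply_add_mem_mul_le U hsol.2.2.2 hyz)
    rw [Nat.card_prod]
    push_cast at h ⊢
    rw [← le_div_iff₀ (mod_cast Nat.card_pos)] at h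
    exact h.trans_eq (by field_simp)
  obtain ⟨I, -, hIT, hI⟩ := exists_subset_avoiding_of_random
    (Set.toFinite (Set.univ : Set V)).toFinset T S (fun x _ => hpoint x) htriple
  refine ⟨I, fun x hx y hy z hz hxyz => ?_, ?_⟩
  · by_contra hyz
    exact hIT x y z ((Set.Finite.mem_toFinset _).2 ⟨⟨trivial, trivial, trivial, hxyz⟩, hyz⟩)
      ⟨hx, hy, hz⟩
  · have hT : (T.card : ℝ) ≤ Nat.card V ^ 2 := by
      rw [← Set.ncard_eq_toFinset_card]
      exact_mod_cast (Set.ncard_le_ncard Set.inter_subset_left).trans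
        (ncard_capSolutions_univ_le τ V)
    rw [← Set.ncard_eq_toFinset_card, Set.ncard_univ] at hI
    rw [Set.ncard_coe_finset]
    exact hI.trans' (by gcongr)

theorem exists_isCap_of_ncard_capSolutions_le [Finite V] [Finite W] {τ : k} {U : Set W}
    (hU : 2 * (capSolutions τ U).ncard * Nat.card V ≤ U.ncard * Nat.card W) :
    ∃ I : Set V, IsCap τ I ∧ U.ncard * Nat.card V ≤ 2 * Nat.card W * I.ncard := by
  obtain ⟨I, hI, hle⟩ := exists_isCap_of_affine_pullback (V := V) τ U
  refine ⟨I, hI, ?_⟩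
  have hV : (0 : ℝ) < Nat.card V := mod_cast Nat.card_pos
  have hW : (0 : ℝ) < Nat.card W := mod_cast Nat.card_pos
  have hU : (2 * (capSolutions τ U).ncard * Nat.card V : ℝ) ≤ U.ncard * Nat.card W :=
    mod_cast hU
  have hhalf : ((capSolutions τ U).ncard / Nat.card W ^ 2 * Nat.card V ^ 2 : ℝ) ≤
      U.ncard / Nat.card W * Nat.card V / 2 := by
    field_simp
    linarith
  have hle : (U.ncard / Nat.card W * Nat.card V / 2 : ℝ) ≤ I.ncard := by linarith
  field_simp at hle
  rw [mul_comm (Nat.card W : ℝ)] at hle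
  exact_mod_cast hle

end AffinePullback

section FieldCaps

/-- A module `N` has a large cap in dimension `m` if `N ^ m` contains a cap whose exponent exceeds
`2 / 3`, by enough to gain a factor `|N|` in the third power. -/
def HasLargeCap {R : Type*} [CommRing R] (τ : R) (N : Type*) [AddCommGroup N] [Module R N]
    (m : ℕ) : Prop :=
  ∃ C : Set (Fin m → N), IsCap τ C ∧ Nat.card N ^ (2 * m + 1) ≤ C.ncard ^ 3

variable {k : Type*} [Field k] [Finite k]

theorem exists_anisotropic_form (k : Type*) [Field k] [Finite k] :
    ∃ a b : k, ∀ u v : k, u ^ 2 - a * u * v + b * v ^ 2 = 0 → u = 0 ∧ v = 0 := by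
  have hns : ¬ Function.Surjective fun t : k × k => (t.1 + t.2, t.1 * t.2) := fun hs => by
    simpa using Finite.injective_iff_surjective.2 hs (a₁ := (0, 1)) (a₂ := (1, 0)) (by simp)
  simp only [Function.Surjective, not_forall, not_exists] at hns
  obtain ⟨⟨a, b⟩, hab⟩ := hns
  refine ⟨a, b, fun u v huv => ?_⟩
  rcases eq_or_ne v 0 with rfl | hv
  · simpa using huv
  · refine absurd (Prod.ext ?_ ?_) (hab (u / v, a - u / v))
    · simp
    · field_simp
      linear_combination -huv

/-- The elliptic paraboloid is a cap of exponent exactly `2 / 3`. -/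
theorem exists_isCap_of_anisotropic (k : Type*) [Field k] [Finite k] :
    ∃ C : Set (k × k × k), (∀ τ : k, τ ≠ 0 → 1 + τ ≠ 0 → IsCap τ C) ∧
      C.ncard = Nat.card k ^ 2 ∧ (0, 0, 1) ∉ C := by
  obtain ⟨a, b, hab⟩ := exists_anisotropic_form k
  refine ⟨Set.range fun t : k × k => (t.1, t.2, t.1 ^ 2 - a * t.1 * t.2 + b * t.2 ^ 2),
    fun τ hτ hτ1 => ?_, ?_, ?_⟩
  · rintro _ ⟨⟨x₁, x₂⟩, rfl⟩ _ ⟨⟨y₁, y₂⟩, rfl⟩ _ ⟨⟨z₁, z₂⟩, rfl⟩ h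
    simp only [Prod.smul_mk, Prod.mk_add_mk, smul_eq_mul, Prod.mk.injEq] at h
    obtain ⟨h₁, h₂, h₃⟩ := h
    obtain rfl : x₁ = (1 + τ) * z₁ - τ * y₁ := by linear_combination h₁
    obtain rfl : x₂ = (1 + τ) * z₂ - τ * y₂ := by linear_combination h₂
    have hform : τ * (1 + τ) *
        ((y₁ - z₁) ^ 2 - a * (y₁ - z₁) * (y₂ - z₂) + b * (y₂ - z₂) ^ 2) = 0 := by
      linear_combination h₃
    obtain ⟨h₁, h₂⟩ := hab _ _ ((mul_eq_zero.1 hform).resolve_left (mul_ne_zero hτ hτ1))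
    rw [sub_eq_zero.1 h₁, sub_eq_zero.1 h₂]
  · rw [← Set.image_univ, Set.InjOn.ncard_image, Set.ncard_univ, Nat.card_prod, sq]
    rintro ⟨u, v⟩ - ⟨u', v'⟩ - h
    simp only [Prod.mk.injEq] at h
    rw [h.1, h.2.1]
  · rintro ⟨⟨u, v⟩, h⟩
    simp only [Prod.mk.injEq] at h
    obtain ⟨rfl, rfl, h⟩ := h
    simp at h

/-- The dimension in which caps of exponent greater than `2 / 3` are found over a field with `q`
elements. -/
def fieldCapDim (q : ℕ) : ℕ := 3 * q ^ 20 - 50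

theorem ncard_blockSet_and_ncard_capSolutions_le {τ : k} {C : Set (k × k × k)} (hC : IsCap τ C)
    (hcard : C.ncard = Nat.card k ^ 2) {w : k × k × k} (hw : w ∉ C) {r : ℕ}
    (hr : r + 1 = Nat.card k ^ 20) :
    (blockSet r w C).ncard = Nat.card k ^ (2 * r + 20) ∧
      (capSolutions τ (blockSet r w C)).ncard ≤ Nat.card k ^ 49 * (blockSet r w C).ncard := by
  constructor
  · rw [ncard_blockSet r hw, hcard, hr]
    ring
  · refine (ncard_capSolutions_blockSet_le hC r w).trans_eq (congrArg (· * _) ?_)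
    rw [hr, Nat.card_prod, Nat.card_prod]
    ring

/-- Blocks in `k ^ 3`, in number `q ^ 20`, are pulled back to a space whose dimension is smaller by
`50`, so that the expected number of solutions becomes small enough for deletion. -/
theorem hasLargeCap_fieldCapDim {τ : k} (hτ : τ ≠ 0) (hτ1 : 1 + τ ≠ 0) :
    HasLargeCap τ k (fieldCapDim (Nat.card k)) := by
  obtain ⟨C, hC, hcard, hmem⟩ := exists_isCap_of_anisotropic k
  set q := Nat.card k with hq
  have hq2 : 2 ≤ q := Finite.one_lt_card
  obtain ⟨e, he⟩ : ∃ e, q ^ 20 = e + 49 + 1 :=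
    Nat.exists_eq_add_of_le' ((by norm_num : 50 ≤ 2 ^ 20).trans (Nat.pow_le_pow_left hq2 20))
  have hn : fieldCapDim q = 100 + 3 * e := by
    rw [fieldCapDim]
    lia
  obtain ⟨hU, hsol⟩ := ncard_blockSet_and_ncard_capSolutions_le (hC τ hτ hτ1) hcard hmem he.symm
  set U := blockSet (e + 49) (0, 0, 1) C
  have hW : Nat.card (Fin (e + 49 + 1) → k × k × k) = q ^ (150 + 3 * e) := by
    simp only [Nat.card_fun, Nat.card_prod, Nat.card_fin, ← hq, ← pow_succ', ← pow_mul, ← sq]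
    congr 1
    ring
  have hV : Nat.card (Fin (fieldCapDim q) → k) = q ^ (100 + 3 * e) := by
    rw [Nat.card_fun, Nat.card_fin, hn]
  obtain ⟨I, hI, hcard⟩ := exists_isCap_of_ncard_capSolutions_le (τ := τ) (U := U)
    (V := Fin (fieldCapDim q) → k) <|
    calc 2 * (capSolutions τ U).ncard * Nat.card (Fin (fieldCapDim q) → k)
        ≤ q * (q ^ 49 * U.ncard) * q ^ (100 + 3 * e) := by rw [hV]; gcongr
      _ = _ := by rw [hW]; ring
  have hI_ge : q ^ (67 + 2 * e) ≤ I.ncard := by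
    rw [hV, hW, hU] at hcard
    refine Nat.le_of_mul_le_mul_left (c := q ^ (151 + 3 * e)) ?_ (by positivity)
    calc q ^ (151 + 3 * e) * q ^ (67 + 2 * e)
        = q ^ (2 * (e + 49) + 20) * q ^ (100 + 3 * e) := by ring
      _ ≤ 2 * q ^ (150 + 3 * e) * I.ncard := hcard
      _ ≤ q * q ^ (150 + 3 * e) * I.ncard := by gcongr
      _ = q ^ (151 + 3 * e) * I.ncard := by ring
  refine ⟨I, hI, ?_⟩
  calc q ^ (2 * fieldCapDim q + 1) = (q ^ (67 + 2 * e)) ^ 3 := by rw [hn]; ring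
    _ ≤ I.ncard ^ 3 := Nat.pow_le_pow_left hI_ge 3

end FieldCaps

section ModuleCaps

variable {R N N' : Type*} [CommRing R] [AddCommGroup N] [Module R N] [AddCommGroup N'] [Module R N']
  {τ : R} {m : ℕ}

theorem IsCap.image {C : Set N} (hC : IsCap τ C) {f : N →ₗ[R] N'} (hf : Function.Injective f) :
    IsCap τ (f '' C) := by
  rintro _ ⟨x, hx, rfl⟩ _ ⟨y, hy, rfl⟩ _ ⟨z, hz, rfl⟩ h
  rw [← map_smul, ← map_smul, ← map_add] at h
  rw [hC x hx y hy z hz (hf h)]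

theorem IsCap.pi {ι : Type*} {C : Set N} (hC : IsCap τ C) : IsCap τ {x : ι → N | ∀ i, x i ∈ C} :=
  fun _ hx _ hy _ hz h => funext fun i => hC _ (hx i) _ (hy i) _ (hz i) (congrFun h i)

theorem HasLargeCap.of_linearEquiv (h : HasLargeCap τ N m) (e : N ≃ₗ[R] N') :
    HasLargeCap τ N' m := by
  obtain ⟨C, hC, hcard⟩ := h
  have hinj := (LinearEquiv.piCongrRight fun _ : Fin m => e).injective
  refine ⟨_, hC.image (f := (LinearEquiv.piCongrRight fun _ : Fin m => e).toLinearMap) hinj, ?_⟩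
  rwa [← Nat.card_congr e.toEquiv, LinearEquiv.coe_coe, Set.ncard_image_of_injective _ hinj]

theorem HasLargeCap.of_algebraMap {S : Type*} [CommRing S] [Algebra R S] [Module S N]
    [IsScalarTower R S N] (h : HasLargeCap (algebraMap R S τ) N m) : HasLargeCap τ N m := by
  obtain ⟨C, hC, hcard⟩ := h
  refine ⟨C, fun x hx y hy z hz h => hC x hx y hy z hz ?_, hcard⟩
  rwa [← map_one (algebraMap R S), ← map_add, algebraMap_smul, algebraMap_smul]

theorem HasLargeCap.of_dvd [Finite N] {n : ℕ} (h : HasLargeCap τ N m) (hn : 0 < n) (hmn : m ∣ n) :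
    HasLargeCap τ N n := by
  obtain ⟨C, hC, hcard⟩ := h
  obtain ⟨c, rfl⟩ := hmn
  have hc : 0 < c := Nat.pos_of_mul_pos_left hn
  let e : (Fin c → Fin m → N) ≃ₗ[R] (Fin (m * c) → N) :=
    (LinearEquiv.curry R N (Fin c) (Fin m)).symm.trans (LinearEquiv.funCongrLeft R N
      (finProdFinEquiv.symm.trans (Equiv.prodComm _ _)))
  refine ⟨e.toLinearMap '' {x | ∀ i, x i ∈ C}, (IsCap.pi hC).image e.injective, ?_⟩
  rw [LinearEquiv.coe_coe, Set.ncard_image_of_injective _ e.injective, ncard_setOf_forall]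
  calc Nat.card N ^ (2 * (m * c) + 1) ≤ Nat.card N ^ ((2 * m + 1) * c) :=
        Nat.pow_le_pow_right Nat.card_pos (by linarith)
    _ = (Nat.card N ^ (2 * m + 1)) ^ c := pow_mul _ _ _
    _ ≤ (C.ncard ^ 3) ^ c := Nat.pow_le_pow_left hcard c
    _ = (C.ncard ^ c) ^ 3 := pow_right_comm _ _ _

/-- Lift a cap of the quotient along a section and translate each lift by a cap of the
submodule. -/
theorem HasLargeCap.of_submodule {P : Submodule R N} (hP : HasLargeCap τ P m)
    (hquot : HasLargeCap τ (N ⧸ P) m) : HasLargeCap τ N m := by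
  obtain ⟨C, hC, hcardC⟩ := hP
  obtain ⟨D, hD, hcardD⟩ := hquot
  let lift (t : (Fin m → P) × (Fin m → N ⧸ P)) : Fin m → N := fun i => t.1 i + (t.2 i).out
  have hmk : ∀ t i, P.mkQ (lift t i) = t.2 i := fun t i => by
    rw [map_add, P.mkQ_apply, (Submodule.Quotient.mk_eq_zero P).2 (t.1 i).2, zero_add]
    exact Quotient.out_eq' _
  have hinj : Function.Injective lift := fun t t' h => by
    have hsnd : t.2 = t'.2 := funext fun i => by rw [← hmk t i, ← hmk t' i, h]
    refine Prod.ext (funext fun i => Subtype.ext ?_) hsnd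
    have hi := congrFun h i
    simp only [lift, hsnd] at hi
    exact add_right_cancel hi
  refine ⟨lift '' (C ×ˢ D), ?_, ?_⟩
  · rintro _ ⟨x, hx, rfl⟩ _ ⟨y, hy, rfl⟩ _ ⟨z, hz, rfl⟩ h
    have hsnd : x.2 + τ • y.2 = (1 + τ) • z.2 := funext fun i => by
      simpa only [Pi.add_apply, Pi.smul_apply, map_add, map_smul, hmk] using
        congrArg P.mkQ (congrFun h i)
    have hyz : y.2 = z.2 := hD _ hx.2 _ hy.2 _ hz.2 hsnd
    have hxz : x.2 = z.2 := by
      rw [hyz, add_smul, one_smul] at hsnd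
      exact add_right_cancel hsnd
    have hfst : x.1 + τ • y.1 = (1 + τ) • z.1 := funext fun i => Subtype.ext <| by
      have hi := congrFun h i
      simp only [lift, Pi.add_apply, Pi.smul_apply, hyz, hxz] at hi
      refine add_right_cancel (b := (1 + τ) • (z.2 i).out) ?_
      simp only [Pi.add_apply, Pi.smul_apply, Submodule.coe_add, Submodule.coe_smul]
      rw [← smul_add, ← hi]
      module
    rw [Prod.ext (hC _ hx.1 _ hy.1 _ hz.1 hfst) hyz]
  · rw [Set.ncard_image_of_injective _ hinj, Set.ncard_prod, mul_pow,
      Submodule.card_eq_card_quotient_mul_card P, mul_pow]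
    exact Nat.mul_le_mul hcardC hcardD

/-- A common dimension in which all fields with at most `B` elements have large caps. -/
def moduleCapDim (B : ℕ) : ℕ := ∏ q ∈ Finset.Icc 2 B, fieldCapDim q

theorem moduleCapDim_pos (B : ℕ) : 0 < moduleCapDim B := by
  refine Finset.prod_pos fun q hq => Nat.sub_pos_of_lt ?_
  calc 50 < 3 * 2 ^ 20 := by norm_num
    _ ≤ 3 * q ^ 20 := Nat.mul_le_mul_left 3 (Nat.pow_le_pow_left (Finset.mem_Icc.1 hq).1 20)

theorem hasLargeCap_quotient_of_isMaximal {P : Ideal R} (hP : P.IsMaximal) [Finite (R ⧸ P)]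
    {B : ℕ} (hτ : τ ∉ P) (hτ1 : 1 + τ ∉ P) (hB : Nat.card (R ⧸ P) ≤ B) :
    HasLargeCap τ (R ⧸ P) (moduleCapDim B) := by
  let _ : Field (R ⧸ P) := Ideal.Quotient.field P
  refine HasLargeCap.of_algebraMap (S := R ⧸ P) (HasLargeCap.of_dvd
    (hasLargeCap_fieldCapDim ?_ ?_) (moduleCapDim_pos B)
    (Finset.dvd_prod_of_mem _ (Finset.mem_Icc.2 ⟨Finite.one_lt_card, hB⟩)))
  · rwa [Ne, Ideal.Quotient.algebraMap_eq, Ideal.Quotient.eq_zero_iff_mem]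
  · rwa [Ideal.Quotient.algebraMap_eq, ← map_one (Ideal.Quotient.mk P), ← map_add, Ne,
      Ideal.Quotient.eq_zero_iff_mem]

theorem hasLargeCap_moduleCapDim (τ : R) (B : ℕ) (N : Type*) [AddCommGroup N] [Module R N]
    [Finite N] (h : ∀ P : Ideal R, P.IsMaximal → Module.annihilator R N ≤ P →
      τ ∉ P ∧ 1 + τ ∉ P ∧ Nat.card (R ⧸ P) ≤ B) :
    HasLargeCap τ N (moduleCapDim B) := by
  induction hs : Nat.card N using Nat.strong_induction_on generalizing N with
  | _ s ih =>
  rcases subsingleton_or_nontrivial N with hN | hN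
  · exact ⟨{0}, fun _ _ _ _ _ _ _ => Subsingleton.elim _ _, by simp⟩
  have : IsArtinian R N := isArtinian_of_finite
  obtain ⟨S, hS⟩ := IsAtomic.exists_atom (Submodule R N)
  have hsimple : IsSimpleModule R S := isSimpleModule_iff_isAtom.2 hS
  obtain ⟨P, hP, ⟨e⟩⟩ := isSimpleModule_iff_quot_maximal.1 hsimple
  have : Finite (R ⧸ P) := Finite.of_equiv _ e.toEquiv
  have hann : Module.annihilator R N ≤ P := by
    rw [← Ideal.annihilator_quotient (I := P), ← e.annihilator_eq]
    exact S.subtype.annihilator_le_of_injective S.subtype_injective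
  obtain ⟨hτ, hτ1, hB⟩ := h P hP hann
  have : Finite (N ⧸ S) := Finite.of_surjective _ S.mkQ_surjective
  have hlt : Nat.card (N ⧸ S) < s := by
    rw [← hs, Submodule.card_eq_card_quotient_mul_card S]
    exact lt_mul_of_one_lt_left Nat.card_pos
      (Finite.one_lt_card_iff_nontrivial.2 hsimple.nontrivial)
  exact HasLargeCap.of_submodule
    ((hasLargeCap_quotient_of_isMaximal hP hτ hτ1 hB).of_linearEquiv e.symm)
    (ih _ hlt (N ⧸ S) (fun P' hP' hP'' => h P' hP'
      ((S.mkQ.annihilator_le_of_surjective S.mkQ_surjective).trans hP'')) rfl)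

end ModuleCaps

section ResidueFields

open Polynomial

variable {κ : Type*} [CommRing κ] {l : ℕ} [CharP κ l] {ξ : κ} {f : ℤ[X]}

theorem dvd_eval_of_aeval_intCast_eq_zero {a : ℤ} (hf : aeval (a : κ) f = 0) :
    (l : ℤ) ∣ f.eval a := by
  rw [← eq_intCast (algebraMap ℤ κ), aeval_algebraMap_apply_eq_algebraMap_eval, eq_intCast] at hf
  exact (CharP.intCast_eq_zero_iff κ l _).1 hf

theorem natCard_le_pow_natDegree [Fact l.Prime] (hξ : Function.Surjective (aeval (R := ℤ) ξ))
    (hf : aeval ξ f = 0) (hlc : ¬ (l : ℤ) ∣ f.leadingCoeff) :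
    Nat.card κ ≤ l ^ f.natDegree := by
  let _ : Algebra (ZMod l) κ := ZMod.algebra κ l
  let f' : (ZMod l)[X] := f.map (Int.castRingHom (ZMod l))
  have hlc' : Int.castRingHom (ZMod l) f.leadingCoeff ≠ 0 := by
    rwa [eq_intCast, Ne, ZMod.intCast_zmod_eq_zero_iff_dvd]
  have hdeg : f'.natDegree = f.natDegree := natDegree_map_of_leadingCoeff_ne_zero _ hlc'
  have hf' : f' ≠ 0 := leadingCoeff_ne_zero.1 <| by
    rwa [leadingCoeff_map_of_leadingCoeff_ne_zero _ hlc']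
  have haeval (g : ℤ[X]) : aeval ξ (g.map (Int.castRingHom (ZMod l))) = aeval ξ g :=
    aeval_map_algebraMap (ZMod l) ξ g
  let φ := AdjoinRoot.liftAlgHom f' (Algebra.ofId (ZMod l) κ) ξ (by
    exact (haeval f).trans hf)
  have hφ : Function.Surjective φ := fun a => by
    obtain ⟨g, rfl⟩ := hξ a
    exact ⟨AdjoinRoot.mk f' (g.map (Int.castRingHom (ZMod l))), haeval g⟩
  have : Module.Finite (ZMod l) (AdjoinRoot f') := (AdjoinRoot.powerBasis hf').finite
  have : Finite (AdjoinRoot f') := Module.finite_of_finite (ZMod l)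
  calc Nat.card κ ≤ Nat.card (AdjoinRoot f') := Nat.card_le_card_of_surjective φ hφ
    _ = l ^ f.natDegree := by
      rw [Module.natCard_eq_pow_finrank (K := ZMod l), (AdjoinRoot.powerBasis hf').finrank,
        AdjoinRoot.powerBasis_dim, hdeg, Nat.card_zmod]

theorem X_notMem_and_one_add_X_notMem_and_natCard_quotient_le {l : ℕ} (hl : l.Prime)
    (hlf : ¬ (l : ℤ) ∣ f.leadingCoeff * f.eval 0 * f.eval (-1)) {P : Ideal ℤ[X]}
    (hP : P.IsPrime) (hlP : (l : ℤ[X]) ∈ P) (hfP : f ∈ P) :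
    X ∉ P ∧ 1 + X ∉ P ∧ Nat.card (ℤ[X] ⧸ P) ≤ l ^ f.natDegree := by
  have : Fact l.Prime := ⟨hl⟩
  let ξ : ℤ[X] ⧸ P := Ideal.Quotient.mk P X
  have : CharP (ℤ[X] ⧸ P) l := (CharP.charP_iff_prime_eq_zero hl).2 <| by
    rwa [← map_natCast (Ideal.Quotient.mk P), Ideal.Quotient.eq_zero_iff_mem]
  have hmk (g : ℤ[X]) : aeval ξ g = Ideal.Quotient.mk P g :=
    (aeval_algHom_apply (Ideal.Quotient.mkₐ ℤ P) X g).trans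
      (congrArg (Ideal.Quotient.mkₐ ℤ P) (aeval_X_left_apply g))
  have hroot : aeval ξ f = 0 := by rwa [hmk, Ideal.Quotient.eq_zero_iff_mem]
  refine ⟨fun h => hlf ?_, fun h => hlf ?_, natCard_le_pow_natDegree
    (fun a => (Ideal.Quotient.mk_surjective a).imp fun g hg => (hmk g).trans hg) hroot
    fun h => hlf ((h.mul_right _).mul_right _)⟩
  · have hξ : ξ = (0 : ℤ) := by rwa [Int.cast_zero, Ideal.Quotient.eq_zero_iff_mem]
    exact ((dvd_eval_of_aeval_intCast_eq_zero (hξ ▸ hroot)).mul_left _).mul_right _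
  · have hξ : ξ = (-1 : ℤ) := by
      rw [Int.cast_neg, Int.cast_one, eq_neg_iff_add_eq_zero, add_comm]
      exact Ideal.Quotient.eq_zero_iff_mem.2 h
    exact (dvd_eval_of_aeval_intCast_eq_zero (hξ ▸ hroot)).mul_left _

end ResidueFields

section RecurrentSequences

open Polynomial

/-- The sequences in `A`, as a module over `ℤ[X]` on which `X` acts as the shift. -/
abbrev SeqModule (A : Type*) [CommRing A] : Type _ :=
  Module.AEval' (LinearMap.funLeft ℤ A Nat.succ)

/-- The linear recurrent sequences with characteristic polynomial `f`, which need not be monic. -/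
noncomputable def recurrentSeqs (A : Type*) [CommRing A] (f : ℤ[X]) :
    Submodule ℤ[X] (SeqModule A) :=
  Submodule.torsionBy ℤ[X] (SeqModule A) f

variable {A : Type*} [CommRing A] {f : ℤ[X]}

/-- The `n`-th term of a sequence. -/
def SeqModule.term (u : SeqModule A) (n : ℕ) : A :=
  (Module.AEval'.of (LinearMap.funLeft ℤ A Nat.succ)).symm u n

@[ext]
theorem SeqModule.ext {u v : SeqModule A} (h : ∀ n, u.term n = v.term n) : u = v :=
  (Module.AEval'.of _).symm.injective (funext h)

theorem SeqModule.term_add (u v : SeqModule A) (n : ℕ) :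
    (u + v).term n = u.term n + v.term n := by
  rw [SeqModule.term, map_add]
  rfl

theorem SeqModule.term_X_smul (u : SeqModule A) (n : ℕ) :
    ((X : ℤ[X]) • u).term n = u.term (n + 1) := by
  rw [SeqModule.term, Module.AEval'.of_symm_X_smul]
  rfl

theorem SeqModule.term_X_pow_smul (u : SeqModule A) (i n : ℕ) :
    ((X ^ i : ℤ[X]) • u).term n = u.term (n + i) := by
  induction i generalizing n with
  | zero => rw [pow_zero, one_smul, add_zero]
  | succ i ih => rw [pow_succ', mul_smul, term_X_smul, ih, add_right_comm, add_assoc]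

theorem SeqModule.term_C_smul (a : ℤ) (u : SeqModule A) (n : ℕ) :
    (C a • u).term n = a * u.term n := by
  rw [Module.AEval.C_smul, SeqModule.term, map_smul, Pi.smul_apply, zsmul_eq_mul]
  rfl

theorem SeqModule.term_smul (g : ℤ[X]) (u : SeqModule A) (n : ℕ) :
    (g • u).term n =
      g.leadingCoeff * u.term (n + g.natDegree)
        + ∑ i : Fin g.natDegree, (g.coeff i : A) * u.term (n + i) := by
  have hsum {ι : Type} (s : Finset ι) (v : ι → SeqModule A) :
      (∑ i ∈ s, v i).term n = ∑ i ∈ s, (v i).term n := by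
    rw [SeqModule.term, map_sum, Finset.sum_apply]
    rfl
  conv_lhs => rw [g.as_sum_range_C_mul_X_pow, Finset.sum_smul, hsum, Finset.sum_range_succ]
  rw [add_comm, Finset.sum_range]
  simp only [mul_smul, term_C_smul, term_X_pow_smul, leadingCoeff]

/-- The first `k` terms of a sequence. -/
def SeqModule.initialTerms (k : ℕ) (u : SeqModule A) : Fin k → A :=
  fun i => u.term i

theorem mem_recurrentSeqs_iff {u : SeqModule A} :
    u ∈ recurrentSeqs A f ↔ ∀ n, f.leadingCoeff * u.term (n + f.natDegree)
      + ∑ i : Fin f.natDegree, (f.coeff i : A) * u.term (n + i) = 0 := by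
  simp only [recurrentSeqs, Submodule.mem_torsionBy_iff, SeqModule.ext_iff,
    SeqModule.term_smul]
  rfl

theorem bijective_initialTerms (hf : IsUnit (f.leadingCoeff : A)) :
    Function.Bijective fun u : recurrentSeqs A f => u.1.initialTerms f.natDegree := by
  obtain ⟨c, hc⟩ := hf
  let E : LinearRecurrence A := ⟨f.natDegree, fun i => -(↑c⁻¹ * f.coeff i)⟩
  have hE {u : SeqModule A} : u ∈ recurrentSeqs A f ↔ E.IsSolution u.term := by
    rw [mem_recurrentSeqs_iff]
    refine forall_congr' fun n => ?_
    simp only [E, neg_mul, mul_assoc, Finset.sum_neg_distrib, ← Finset.mul_sum]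
    rw [← hc, ← mul_neg, Units.eq_inv_mul_iff_mul_eq, add_eq_zero_iff_eq_neg]
  refine ⟨fun u v h => Subtype.ext (SeqModule.ext fun n => ?_), fun x => ?_⟩
  · have hmk := E.eq_mk_of_is_sol_of_eq_init (hE.1 v.2) (fun _ => rfl) n
    exact (E.eq_mk_of_is_sol_of_eq_init (hE.1 u.2) (congrFun h) n).trans hmk.symm
  · let u : SeqModule A := Module.AEval'.of _ (E.mkSol x)
    exact ⟨⟨u, hE.2 (E.is_sol_mkSol x)⟩, funext (E.mkSol_eq_init x)⟩

theorem natCard_recurrentSeqs (hf : IsUnit (f.leadingCoeff : A)) :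
    Nat.card (recurrentSeqs A f) = Nat.card A ^ f.natDegree := by
  rw [Nat.card_congr (Equiv.ofBijective _ (bijective_initialTerms hf)), Nat.card_fun,
    Nat.card_fin]

theorem isUnit_intCast_zmod_of_dvd_pow {l M j : ℕ} (hl : l.Prime) (hM : M ∣ l ^ j) {a : ℤ}
    (ha : ¬ (l : ℤ) ∣ a) : IsUnit (a : ZMod M) := by
  rw [ZMod.coe_int_isUnit_iff_isCoprime]
  refine IsCoprime.of_isCoprime_of_dvd_left (y := (l : ℤ) ^ j) ?_ (mod_cast hM)
  exact ((Nat.prime_iff_prime_int.1 hl).irreducible.coprime_iff_not_dvd.2 ha).pow_left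

theorem hasLargeCap_recurrentSeqs {l M j : ℕ} [NeZero M] (hl : l.Prime) (hM : M ∣ l ^ j)
    (hlf : ¬ (l : ℤ) ∣ f.leadingCoeff * f.eval 0 * f.eval (-1)) {s : ℕ}
    (hunit : IsUnit ((f ^ s).leadingCoeff : ZMod M)) :
    HasLargeCap (X : ℤ[X]) (recurrentSeqs (ZMod M) (f ^ s))
      (moduleCapDim (l ^ f.natDegree)) := by
  have : Finite (recurrentSeqs (ZMod M) (f ^ s)) :=
    Finite.of_injective _ (bijective_initialTerms hunit).1
  refine hasLargeCap_moduleCapDim X _ _ fun P hP hann => ?_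
  refine X_notMem_and_one_add_X_notMem_and_natCard_quotient_le hl hlf hP.isPrime ?_ ?_
  · refine hP.isPrime.mem_of_pow_mem j (hann (Module.mem_annihilator.2 fun u => ?_))
    refine Subtype.ext (SeqModule.ext fun n => ?_)
    have hzero : ((l ^ j : ℤ) : ZMod M) = 0 := mod_cast (ZMod.natCast_eq_zero_iff _ _).2 hM
    have hC : (l ^ j : ℤ[X]) = C (l ^ j : ℤ) := by rw [C_pow, map_natCast]
    rw [hC, Submodule.coe_smul, SeqModule.term_C_smul, hzero, zero_mul]
    rfl
  · exact hP.isPrime.mem_of_pow_mem s (hann (Module.mem_annihilator.2 fun u =>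
      Submodule.smul_torsionBy _ u))

end RecurrentSequences

section DigitCaps

open Polynomial

theorem sum_abs_single_add_abs_add_le {k : ℕ} (i : Fin k) (a : ℤ) (β : Fin k → ℤ) :
    ∑ n, (|(Pi.single i a : Fin k → ℤ) n| + |β n| + |(Pi.single i a : Fin k → ℤ) n + β n|) ≤
      2 * |a| + 2 * ∑ n, |β n| := by
  have hsingle : ∑ n, |(Pi.single i a : Fin k → ℤ) n| = |a| := by
    simp [Pi.single_apply, apply_ite abs]
  rw [← hsingle, Finset.mul_sum, Finset.mul_sum, ← Finset.sum_add_distrib]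
  refine Finset.sum_le_sum fun n _ => ?_
  linarith [abs_add_le ((Pi.single i a : Fin k → ℤ) n) (β n)]

section Relations

variable {F : Type*} [Field F] {τ : F} {m k M H : ℕ} {x y z : Fin m → Fin k → ZMod M}

theorem intEval_single (i : Fin k) (a : ℤ) :
    intEval τ (Pi.single i a : Fin k → ℤ) = a * τ ^ (i : ℕ) := by
  simp [intEval, Pi.single_apply]

theorem SatisfiesDigitRelations.single (h : SatisfiesDigitRelations τ H x y z) {i : Fin k} {a : ℤ}
    {β : Fin k → ℤ} (hH : 2 * |a| + 2 * ∑ n, |β n| ≤ (H : ℤ))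
    (hβ : intEval τ β = a * τ ^ (i + 1 : ℕ)) (j : Fin m) :
    a * x j i + ∑ n, (β n : ZMod M) * y j n = a * z j i + ∑ n, (β n : ZMod M) * z j n := by
  have hrel := h (Pi.single i a) β ((sum_abs_single_add_abs_add_le i a β).trans hH)
    (by rw [hβ, intEval_single, pow_succ']; ring) j
  simp only [add_mul, Finset.sum_sub_distrib, Finset.sum_add_distrib, Pi.single_apply,
    Int.cast_ite, Int.cast_zero, ite_mul, zero_mul, Finset.sum_ite_eq', Finset.mem_univ,
    if_true] at hrel
  exact sub_eq_zero.1 hrel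

theorem SatisfiesDigitRelations.add_succ (h : SatisfiesDigitRelations τ H x y z) (hH : 4 ≤ H)
    {i i' : Fin k} (hi : (i' : ℕ) = i + 1) (j : Fin m) :
    x j i + y j i' = z j i + z j i' := by
  have hrel := h.single (i := i) (a := 1) (β := Pi.single i' 1) ?_ ?_ j
  · simpa [Pi.single_apply] using hrel
  · simpa [Pi.single_apply, apply_ite abs] using hH
  · rw [intEval_single, hi]

theorem SatisfiesDigitRelations.sum_coeff {f : ℤ[X]} {x y z : Fin m → Fin f.natDegree → ZMod M}
    (h : SatisfiesDigitRelations τ H x y z) (hf : aeval τ f = 0)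
    (hH : 2 * |f.leadingCoeff| + 2 * ∑ i : Fin f.natDegree, |f.coeff i| ≤ (H : ℤ))
    {i : Fin f.natDegree} (hi : (i + 1 : ℕ) = f.natDegree) (j : Fin m) :
    f.leadingCoeff * x j i - ∑ n : Fin f.natDegree, (f.coeff n : ZMod M) * y j n =
      f.leadingCoeff * z j i - ∑ n : Fin f.natDegree, (f.coeff n : ZMod M) * z j n := by
  have hroot : f.leadingCoeff * τ ^ f.natDegree
      + ∑ n : Fin f.natDegree, (f.coeff n : F) * τ ^ (n : ℕ) = 0 := by
    rw [← hf, aeval_eq_sum_range, Finset.sum_range_succ, Finset.sum_range, add_comm]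
    simp only [zsmul_eq_mul, leadingCoeff]
  have hrel := h.single (i := i) (β := fun n => -f.coeff n) (by simpa only [abs_neg] using hH)
    (by simp only [intEval, Int.cast_neg, neg_mul, Finset.sum_neg_distrib, hi]
        exact neg_eq_of_add_eq_zero_left hroot) j
  simpa only [Int.cast_neg, neg_mul, Finset.sum_neg_distrib, ← sub_eq_add_neg] using hrel

end Relations

section RecurrentDigits

variable {A : Type*} [CommRing A] {f : ℤ[X]} {m : ℕ}

/-- The initial terms of several recurrent sequences, which determine the sequences. -/
def recurrentDigits (u : Fin m → recurrentSeqs A f) : Fin m → Fin f.natDegree → A :=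
  fun j => (u j).1.initialTerms f.natDegree

theorem injective_recurrentDigits (hf : IsUnit (f.leadingCoeff : A)) :
    Function.Injective (recurrentDigits (A := A) (f := f) (m := m)) :=
  fun _ _ h => funext fun j => (bijective_initialTerms hf).1 (congrFun h j)

theorem add_X_smul_eq_of_term_eq (hf : IsUnit (f.leadingCoeff : A)) {u v w : recurrentSeqs A f}
    (h : ∀ i < f.natDegree, u.1.term i + v.1.term (i + 1) = w.1.term i + w.1.term (i + 1)) :
    u + (X : ℤ[X]) • v = (1 + X : ℤ[X]) • w := by
  rw [add_smul, one_smul]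
  refine (bijective_initialTerms hf).1 (funext fun i => ?_)
  simp only [SeqModule.initialTerms, Submodule.coe_add, Submodule.coe_smul, SeqModule.term_add,
    SeqModule.term_X_smul]
  exact h i i.2

end RecurrentDigits

variable {F : Type*} [Field F] {τ : F} {f : ℤ[X]} {m M H : ℕ}

theorem IsCap.isDigitCap_of_aeval_eq_zero {C : Set (Fin m → recurrentSeqs (ZMod M) f)}
    (hC : IsCap (X : ℤ[X]) C) (hunit : IsUnit (f.leadingCoeff : ZMod M)) (hf : aeval τ f = 0)
    (hH4 : 4 ≤ H)
    (hH : 2 * |f.leadingCoeff| + 2 * ∑ i : Fin f.natDegree, |f.coeff i| ≤ (H : ℤ)) :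
    IsDigitCap τ H (recurrentDigits '' C) := by
  rintro _ ⟨u, hu, rfl⟩ _ ⟨v, hv, rfl⟩ _ ⟨w, hw, rfl⟩ h
  refine congrArg _ (hC u hu v hv w hw (funext fun j => add_X_smul_eq_of_term_eq hunit ?_))
  intro i hi
  rcases (Nat.succ_le_of_lt hi).lt_or_eq with hi' | hi'
  · exact h.add_succ hH4 (i := ⟨i, hi⟩) (i' := ⟨i + 1, hi'⟩) rfl j
  · have hlast := h.sum_coeff hf hH (i := ⟨i, hi⟩) hi' j
    have hrec (u : recurrentSeqs (ZMod M) f) := mem_recurrentSeqs_iff.1 u.2 0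
    have hv := hrec (v j)
    have hw := hrec (w j)
    simp only [zero_add] at hv hw
    simp only [recurrentDigits, SeqModule.initialTerms] at hlast
    rw [Nat.succ_eq_add_one] at hi'
    rw [hi']
    refine hunit.mul_left_cancel ?_
    linear_combination hlast + hv - hw

/-- Once the two terms around the end of the window are prescribed, the relation which closes the
recurrence is not needed. -/
theorem IsCap.isDigitCap_of_term_eq {C : Set (Fin m → recurrentSeqs (ZMod M) f)}
    (hC : IsCap (X : ℤ[X]) C) (hunit : IsUnit (f.leadingCoeff : ZMod M)) (hH : 4 ≤ H)
    (hterm : ∀ u ∈ C, ∀ v ∈ C, ∀ j, (u j).1.term (f.natDegree - 1) = (v j).1.term (f.natDegree - 1)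
      ∧ (u j).1.term f.natDegree = (v j).1.term f.natDegree) :
    IsDigitCap τ H (recurrentDigits '' C) := by
  rintro _ ⟨u, hu, rfl⟩ _ ⟨v, hv, rfl⟩ _ ⟨w, hw, rfl⟩ h
  refine congrArg _ (hC u hu v hv w hw (funext fun j => add_X_smul_eq_of_term_eq hunit ?_))
  intro i hi
  rcases (Nat.succ_le_of_lt hi).lt_or_eq with hi' | hi'
  · exact h.add_succ hH (i := ⟨i, hi⟩) (i' := ⟨i + 1, hi'⟩) rfl j
  · obtain rfl : i = f.natDegree - 1 := Nat.eq_sub_of_add_eq hi'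
    rw [← Nat.succ_eq_add_one, hi', (hterm u hu w hw j).1, (hterm v hv w hw j).2]

theorem exists_isDigitCap_of_aeval_eq_zero {l j : ℕ} [NeZero M] (hl : l.Prime) (hM : M ∣ l ^ j)
    (hlf : ¬ (l : ℤ) ∣ f.leadingCoeff * f.eval 0 * f.eval (-1)) (hdeg : 0 < f.natDegree)
    (hf : aeval τ f = 0) (hH4 : 4 ≤ H)
    (hH : 2 * |f.leadingCoeff| + 2 * ∑ i : Fin f.natDegree, |f.coeff i| ≤ (H : ℤ)) :
    ∃ C : Set (Fin (moduleCapDim (l ^ f.natDegree)) → Fin f.natDegree → ZMod M),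
      IsDigitCap τ H C ∧
      M ^ (2 * (f.natDegree * moduleCapDim (l ^ f.natDegree)) + 1) ≤ C.ncard ^ 3 := by
  have hunit : IsUnit (f.leadingCoeff : ZMod M) :=
    isUnit_intCast_zmod_of_dvd_pow hl hM fun h => hlf ((h.mul_right _).mul_right _)
  have hlarge := hasLargeCap_recurrentSeqs (s := 1) hl hM hlf
  rw [pow_one] at hlarge
  obtain ⟨C, hC, hcard⟩ := hlarge hunit
  refine ⟨_, hC.isDigitCap_of_aeval_eq_zero hunit hf hH4 hH, ?_⟩
  rw [Set.ncard_image_of_injective _ (injective_recurrentDigits hunit)]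
  rw [natCard_recurrentSeqs hunit, Nat.card_zmod, ← pow_mul] at hcard
  exact (Nat.pow_le_pow_right (NeZero.pos M) (by nlinarith)).trans hcard

theorem exists_ncard_le_ncard_fiber_mul {α β : Type*} [Finite α] [Finite β] [Nonempty β]
    (s : Set α) (φ : α → β) : ∃ b, s.ncard ≤ {a ∈ s | φ a = b}.ncard * Nat.card β := by
  classical
  have := Fintype.ofFinite α
  have := Fintype.ofFinite β
  have hpos : (0 : ℚ) < Fintype.card β := mod_cast Fintype.card_pos
  obtain ⟨b, -, hb⟩ := Finset.exists_le_card_fiber_of_nsmul_le_card_of_maps_to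
    (s := s.toFinset) (t := Finset.univ) (f := φ) (b := (s.toFinset.card / Fintype.card β : ℚ))
    (fun _ _ => Finset.mem_univ _) Finset.univ_nonempty
    (by rw [Finset.card_univ, nsmul_eq_mul, mul_div_cancel₀ _ hpos.ne'])
  refine ⟨b, ?_⟩
  rw [div_le_iff₀ hpos] at hb
  rw [Set.ncard_eq_toFinset_card', Set.ncard_eq_toFinset_card', Nat.card_eq_fintype_card,
    Set.toFinset_ofPred, Finset.filter_and]
  convert hb using 1
  norm_cast
  congr! 3
  ext
  simp

/-- Pigeonhole on the two terms at the end of the window: the loss of `M ^ (2 m)` is made up for by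
the factor that a large cap gains if the degree of `f` is large. -/
theorem HasLargeCap.exists_forall_isDigitCap [NeZero M]
    (hN : HasLargeCap (X : ℤ[X]) (recurrentSeqs (ZMod M) f) m)
    (hunit : IsUnit (f.leadingCoeff : ZMod M)) (hdeg : 6 * m + 1 ≤ f.natDegree) :
    ∃ C : Set (Fin m → Fin f.natDegree → ZMod M),
      M ^ (2 * (f.natDegree * m) + 1) ≤ C.ncard ^ 3 ∧
      ∀ (F : Type*) [Field F] (τ : F) (H : ℕ), 4 ≤ H → IsDigitCap τ H C := by
  have : Finite (recurrentSeqs (ZMod M) f) := Finite.of_injective _ (bijective_initialTerms hunit).1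
  obtain ⟨C₀, hC₀, hcard⟩ := hN
  obtain ⟨b, hb⟩ := exists_ncard_le_ncard_fiber_mul C₀ fun u (j : Fin m) =>
    ((u j).1.term (f.natDegree - 1), (u j).1.term f.natDegree)
  set C : Set (Fin m → recurrentSeqs (ZMod M) f) := {u ∈ C₀ | _}
  refine ⟨recurrentDigits '' C, ?_, fun F _ τ H hH => ?_⟩
  · have hpairs : Nat.card (Fin m → ZMod M × ZMod M) = M ^ (2 * m) := by
      rw [Nat.card_fun, Nat.card_prod, Nat.card_zmod, Nat.card_fin, ← pow_two, ← pow_mul]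
    rw [natCard_recurrentSeqs hunit, Nat.card_zmod, ← pow_mul] at hcard
    rw [hpairs] at hb
    rw [Set.ncard_image_of_injective _ (injective_recurrentDigits hunit)]
    refine Nat.le_of_mul_le_mul_right ?_ (pow_pos (NeZero.pos M) (6 * m))
    calc M ^ (2 * (f.natDegree * m) + 1) * M ^ (6 * m)
          = M ^ (2 * (f.natDegree * m) + 1 + 6 * m) := (pow_add _ _ _).symm
      _ ≤ M ^ (f.natDegree * (2 * m + 1)) := Nat.pow_le_pow_right (NeZero.pos M) (by linarith)
      _ ≤ C₀.ncard ^ 3 := hcard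
      _ ≤ (C.ncard * M ^ (2 * m)) ^ 3 := Nat.pow_le_pow_left hb 3
      _ = C.ncard ^ 3 * M ^ (6 * m) := by ring
  · refine IsCap.isDigitCap_of_term_eq (fun x hx y hy z hz => hC₀ x hx.1 y hy.1 z hz.1) hunit hH ?_
    intro u hu v hv j
    exact Prod.ext_iff.1 (congrFun (hu.2.trans hv.2.symm) j)

theorem exists_forall_isDigitCap {l : ℕ} (hl : l.Prime) :
    ∃ k m : ℕ, 0 < k ∧ 0 < m ∧ ∀ M j : ℕ, 0 < M → M ∣ l ^ j →
      ∃ C : Set (Fin m → Fin k → ZMod M), M ^ (2 * (k * m) + 1) ≤ C.ncard ^ 3 ∧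
        ∀ (F : Type*) [Field F] (τ : F) (H : ℕ), 4 ≤ H → IsDigitCap τ H C := by
  -- The values of `f` at `0` and `-1` are `1`, so that `f` is suitable for every prime `l`.
  let f : ℤ[X] := X ^ 2 + X + 1
  have hdeg : f.natDegree = 2 := by simp only [f]; compute_degree!
  have hmonic : f.Monic := by rw [Monic, leadingCoeff, hdeg]; simp [f, coeff_X, coeff_one]
  have hlf : ¬ (l : ℤ) ∣ f.leadingCoeff * f.eval 0 * f.eval (-1) := by
    simpa [hmonic.leadingCoeff, f] using
      fun h => hl.one_lt.ne' (Nat.dvd_one.1 (Int.natCast_dvd_natCast.1 h))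
  let m := moduleCapDim (l ^ f.natDegree)
  have hm : 0 < m := moduleCapDim_pos _
  have hk : (f ^ (4 * m)).natDegree = 8 * m := by rw [natDegree_pow, hdeg]; ring
  refine ⟨(f ^ (4 * m)).natDegree, m, by lia, hm, fun M j hM hMl => ?_⟩
  have : NeZero M := ⟨hM.ne'⟩
  have hunit : IsUnit ((f ^ (4 * m)).leadingCoeff : ZMod M) := by
    simp [(hmonic.pow (4 * m)).leadingCoeff]
  exact (hasLargeCap_recurrentSeqs hl hMl hlf hunit).exists_forall_isDigitCap hunit (by lia)

end DigitCaps
section UniformSieves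

open Polynomial

/-- All pairs `(F, τ)` with the property `Q`, where `F` is a finite field and `τ ≠ 0, -1`, have cap
sieves with a common constant. -/
def UniformlySieved (Q : ∀ (F : Type) [Field F], F → Prop) : Prop :=
  ∃ c : ℝ, 0 < c ∧ ∀ (F : Type) [Field F] [Finite F] (τ : F), τ ≠ 0 → τ ≠ -1 → Q F τ →
    ∀ (V : Type) [AddCommGroup V] [Module F V] [Finite V], HasCapSieve τ V c

variable {Q Q' : ∀ (F : Type) [Field F], F → Prop}

theorem UniformlySieved.mono (h : UniformlySieved Q)
    (hQ : ∀ (F : Type) [Field F] [Finite F] (τ : F), τ ≠ 0 → τ ≠ -1 → Q' F τ → Q F τ) :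
    UniformlySieved Q' := by
  obtain ⟨c, hc, h⟩ := h
  exact ⟨c, hc, fun F _ _ τ h0 h1 hτ => h F τ h0 h1 (hQ F τ h0 h1 hτ)⟩

theorem UniformlySieved.or (h : UniformlySieved Q) (h' : UniformlySieved Q') :
    UniformlySieved fun F _ τ => Q F τ ∨ Q' F τ := by
  obtain ⟨c, hc, h⟩ := h
  obtain ⟨c', hc', h'⟩ := h'
  refine ⟨min c c', lt_min hc hc', fun F _ _ τ h0 h1 hτ V _ _ _ => ?_⟩
  rcases hτ with hτ | hτ
  · exact (h F τ h0 h1 hτ V).mono (min_le_left _ _)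
  · exact (h' F τ h0 h1 hτ V).mono (min_le_right _ _)

theorem uniformlySieved_biUnion {ι : Type*} (s : Finset ι)
    (Q : ι → ∀ (F : Type) [Field F], F → Prop) (h : ∀ i ∈ s, UniformlySieved (Q i)) :
    UniformlySieved fun F _ τ => ∃ i ∈ s, Q i F τ := by
  classical
  induction s using Finset.induction_on with
  | empty => exact ⟨1, one_pos, fun F _ _ τ _ _ hτ => by simp at hτ⟩
  | insert i s _ ih =>
    refine ((h i (by simp)).or (ih fun j hj => h j (by simp [hj]))).mono fun F _ _ τ _ _ hτ => ?_
    simpa using hτ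

theorem aeval_ofFn {F : Type*} [Field F] {k : ℕ} (τ : F) (α : Fin k → ℤ) :
    aeval τ (ofFn k α) = intEval τ α := by
  simp [ofFn_eq_sum_monomial, intEval, aeval_monomial]

section SmallCharacteristic

variable {p : ℕ} [Fact p.Prime] {F : Type*} [Field F] {τ : F}

theorem noSmallRelation_of_le_natDegree_minpoly [Algebra (ZMod p) F] {k : ℕ}
    (hk : k ≤ (minpoly (ZMod p) τ).natDegree) : NoSmallRelation τ k p := by
  intro α hα h0
  let q : (ZMod p)[X] := (ofFn k α).map (algebraMap ℤ (ZMod p))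
  have hroot : aeval τ q = 0 := by rw [aeval_map_algebraMap, aeval_ofFn, h0]
  have hq : q = 0 := by
    by_contra hq
    have hne : ofFn k α ≠ 0 := fun h => hq (by simp [q, h])
    have hlt : q.natDegree < k := natDegree_map_le.trans_lt
      (ofFn_natDegree_lt (Nat.one_le_iff_ne_zero.2 (ne_zero_of_ofFn_ne_zero hne)) α)
    exact (hk.trans (natDegree_le_natDegree
      (minpoly.degree_le_of_ne_zero (ZMod p) τ hq hroot))).not_gt hlt
  funext i
  have hcoeff : ((α i : ℤ) : ZMod p) = 0 := by
    simpa [q] using congrArg (fun r => r.coeff i) hq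
  exact Int.eq_zero_of_abs_lt_dvd ((ZMod.intCast_zmod_eq_zero_iff_dvd _ p).1 hcoeff) (hα i)

theorem exists_monic_aeval_eq_zero_and_natDegree_eq [Algebra (ZMod p) F]
    (hτ : IsIntegral (ZMod p) τ) (h0 : τ ≠ 0) (h1 : τ ≠ -1) :
    ∃ f : ℤ[X], f.Monic ∧ f.natDegree = (minpoly (ZMod p) τ).natDegree ∧ aeval τ f = 0 ∧
      ¬ (p : ℤ) ∣ f.eval 0 * f.eval (-1) := by
  have hlift : minpoly (ZMod p) τ ∈ lifts (Int.castRingHom (ZMod p)) :=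
    (lifts_iff_coeff_lifts _).2 fun _ => ⟨_, ZMod.intCast_zmod_cast _⟩
  obtain ⟨f, hmap, hdeg, hf⟩ := lifts_and_natDegree_eq_and_monic hlift (minpoly.monic hτ)
  have heval : ∀ r : ℤ, (p : ℤ) ∣ f.eval r → τ = r := by
    intro r hr
    have hroot : (minpoly (ZMod p) τ).IsRoot (r : ZMod p) := by
      rw [IsRoot.def, ← hmap, eval_intCast_map]
      exact (ZMod.intCast_zmod_eq_zero_iff_dvd _ p).2 hr
    simpa using (minpoly.root hτ hroot).symm
  refine ⟨f, hf, hdeg, ?_, fun h => ?_⟩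
  · rw [← minpoly.aeval (ZMod p) τ, ← hmap, ← algebraMap_int_eq, aeval_map_algebraMap]
  · rcases (Nat.prime_iff_prime_int.1 Fact.out).dvd_or_dvd h with h | h
    · exact h0 (by simpa using heval 0 h)
    · exact h1 (by simpa using heval (-1) h)

theorem exists_relation_and_noSmallRelation [CharP F p] [Finite F] (h0 : τ ≠ 0) (h1 : τ ≠ -1) :
    ∃ f : ℤ[X], 0 < f.natDegree ∧ aeval τ f = 0 ∧
      ¬ (p : ℤ) ∣ f.leadingCoeff * f.eval 0 * f.eval (-1) ∧
      ∀ k ≤ f.natDegree, NoSmallRelation τ k p := by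
  let _ : Algebra (ZMod p) F := ZMod.algebra F p
  have hτ : IsIntegral (ZMod p) τ := Algebra.IsIntegral.isIntegral τ
  obtain ⟨f, hf, hdeg, hroot, hpf⟩ := exists_monic_aeval_eq_zero_and_natDegree_eq hτ h0 h1
  refine ⟨f, hdeg ▸ minpoly.natDegree_pos hτ, hroot, ?_,
    fun k hk => noSmallRelation_of_le_natDegree_minpoly (hk.trans_eq hdeg)⟩
  rwa [hf.leadingCoeff, one_mul]

theorem hasCapSieve_of_isDigitCap_of_charP [CharP F p] {V : Type} [AddCommGroup V] [Module F V]
    [Finite V] {k m H : ℕ} (hk : 0 < k) (hm : 0 < m) (hH : 2 ≤ H) (hτ : NoSmallRelation τ k p)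
    {C : Set (Fin m → Fin k → ZMod p)} (hC : IsDigitCap τ H C)
    (hcard : p ^ (2 * (k * m) + 1) ≤ C.ncard ^ 3) :
    HasCapSieve τ V ((p : ℝ) ^ (k * m))⁻¹ := by
  have hp : p.Prime := Fact.out
  refine hasCapSieve_of_isDigitCap (isCellSystem_singleton H) hH one_pos le_rfl
    (by simpa using hp.two_le) one_pos hk hm hτ hC ?_
  rw [one_pow, one_mul]
  exact_mod_cast (Nat.pow_le_pow_right hp.pos (by lia)).trans hcard

end SmallCharacteristic

theorem uniformlySieved_charP {p : ℕ} (hp : p.Prime) : UniformlySieved fun F _ _ => CharP F p := by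
  have : Fact p.Prime := ⟨hp⟩
  obtain ⟨k, m, hk, hm, hfree⟩ := exists_forall_isDigitCap hp
  obtain ⟨C, hCcard, hC⟩ := hfree p 1 hp.pos (by simp)
  have hgeneric : UniformlySieved fun F _ τ => CharP F p ∧ NoSmallRelation τ k p := by
    refine ⟨((p : ℝ) ^ (k * m))⁻¹, by have := hp.pos; positivity, ?_⟩
    rintro F _ _ τ - - ⟨_, hτ⟩ V _ _ _
    exact hasCapSieve_of_isDigitCap_of_charP hk hm (by lia) hτ (hC F τ 4 le_rfl) hCcard
  have halgebraic : ∀ e, UniformlySieved fun F _ τ => CharP F p ∧ ∃ f : ℤ[X], f.natDegree = e ∧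
      0 < f.natDegree ∧ aeval τ f = 0 ∧ ¬ (p : ℤ) ∣ f.leadingCoeff * f.eval 0 * f.eval (-1) ∧
      NoSmallRelation τ f.natDegree p := by
    intro e
    refine ⟨((p : ℝ) ^ (e * moduleCapDim (p ^ e)))⁻¹, by have := hp.pos; positivity, ?_⟩
    rintro F _ _ τ - - ⟨_, f, rfl, hdeg, hroot, hpf, hτ⟩ V _ _ _
    obtain ⟨C, hC, hCcard⟩ := exists_isDigitCap_of_aeval_eq_zero
      (H := 4 + (2 * |f.leadingCoeff| + 2 * ∑ i : Fin f.natDegree, |f.coeff i|).toNat)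
      hp (M := p) (j := 1) (by simp) hpf hdeg hroot (by lia) (by lia)
    exact hasCapSieve_of_isDigitCap_of_charP hdeg (moduleCapDim_pos _) (by lia) hτ hC hCcard
  refine (hgeneric.or (uniformlySieved_biUnion (Finset.range k) _ fun e _ => halgebraic e)).mono
    fun F _ _ τ h0 h1 (_ : CharP F p) => ?_
  obtain ⟨f, hdeg, hroot, hpf, hτ⟩ := exists_relation_and_noSmallRelation (p := p) h0 h1
  rcases le_or_gt k f.natDegree with h | h
  · exact Or.inl ⟨‹_›, hτ k h⟩
  · exact Or.inr ⟨_, Finset.mem_range.2 h, ‹_›, f, rfl, hdeg, hroot, hpf, hτ _ le_rfl⟩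

theorem uniformlySieved_ringChar_lt (N : ℕ) : UniformlySieved fun F _ _ => ringChar F < N := by
  refine (uniformlySieved_biUnion {p ∈ Finset.range N | p.Prime} (fun p F _ _ => CharP F p)
    fun p hp => uniformlySieved_charP (Finset.mem_filter.1 hp).2).mono fun F _ _ τ _ _ hF => ?_
  exact ⟨ringChar F, by simpa using ⟨hF, CharP.char_is_prime F _⟩, ringChar.charP F⟩

theorem uniformlySieved_intCast_eq_zero {n : ℤ} (hn : n ≠ 0) :
    UniformlySieved fun F _ _ => (n : F) = 0 := by
  refine (uniformlySieved_ringChar_lt (n.natAbs + 1)).mono fun F _ _ τ _ _ h => ?_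
  have hdvd := (CharP.intCast_eq_zero_iff F (ringChar F) n).1 h
  exact Nat.lt_succ_of_le
    (Nat.le_of_dvd (Int.natAbs_pos.2 hn) (Int.natCast_dvd.1 hdvd))

theorem uniformlySieved_not_noSmallRelation {k M : ℕ}
    (h : ∀ f : ℤ[X], f ≠ 0 → f.natDegree < k → UniformlySieved fun F _ τ => aeval τ f = 0) :
    UniformlySieved fun F _ τ => ¬ NoSmallRelation τ k M := by
  classical
  let s : Finset (Fin k → ℤ) := {α ∈ Fintype.piFinset fun _ => Finset.Ioo (-M : ℤ) M | α ≠ 0}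
  refine (uniformlySieved_biUnion s (fun α F _ τ => aeval τ (ofFn k α) = 0) fun α hα => ?_).mono
    fun F _ _ τ _ _ hτ => ?_
  · have hne : ofFn k α ≠ 0 :=
      (map_ne_zero_iff _ (injective_ofFn k)).2 (Finset.mem_filter.1 hα).2
    exact h _ hne (ofFn_natDegree_lt (Nat.one_le_iff_ne_zero.2 (ne_zero_of_ofFn_ne_zero hne)) α)
  · simp only [NoSmallRelation, not_forall] at hτ
    obtain ⟨α, hα, hroot, hne⟩ := hτ
    refine ⟨α, ?_, (aeval_ofFn τ α).trans hroot⟩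
    simpa [s, abs_lt] using ⟨fun i => abs_lt.1 (hα i), hne⟩

/-- In large characteristic the digits are read off with arcs; a pair `(F, τ)` for which this fails
satisfies one of finitely many relations. -/
theorem uniformlySieved_of_isDigitCap {k m M H : ℕ} (hk : 0 < k) (hm : 0 < m) (hH : 2 ≤ H)
    (hM : (4 * (2 * (H + 7)) ^ 3) ^ (k * m) ≤ M)
    (hC : ∀ (F : Type) [Field F] (τ : F), Q F τ →
      ∃ C : Set (Fin m → Fin k → ZMod M), IsDigitCap τ H C ∧ M ^ (2 * (k * m) + 1) ≤ C.ncard ^ 3)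
    (hrel : ∀ f : ℤ[X], f ≠ 0 → f.natDegree < k → UniformlySieved fun F _ τ => aeval τ f = 0) :
    UniformlySieved Q := by
  have hM8 : 8 ≤ M := by
    have hbase : 8 ≤ 4 * (2 * (H + 7)) ^ 3 := by
      have : 2 ≤ (2 * (H + 7)) ^ 3 := (by lia : 2 ≤ 2 * (H + 7)).trans (Nat.le_self_pow (by simp) _)
      lia
    exact hbase.trans ((Nat.le_self_pow (by positivity) _).trans hM)
  have : NeZero M := ⟨by lia⟩
  have hlarge : UniformlySieved fun F _ τ =>
      Q F τ ∧ NoSmallRelation τ k M ∧ M * (H + 7) ≤ ringChar F := by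
    refine ⟨((M : ℝ) ^ (k * m))⁻¹, by positivity, ?_⟩
    rintro F _ _ τ - - ⟨hQ, hτ, hchar⟩ V _ _ _
    have : Fact (ringChar F).Prime := ⟨CharP.char_is_prime F _⟩
    obtain ⟨C, hcap, hcard⟩ := hC F τ hQ
    refine hasCapSieve_of_isDigitCap (isCellSystem_arc (by lia) hchar) hH (by norm_num)
      (by norm_num) ?_ (by positivity) hk hm hτ hcap ?_
    · have : (8 : ℝ) ≤ M := mod_cast hM8
      linarith
    · have hsize : (4 * (2 * (H + 7)) ^ 3) ^ (k * m) * M ^ (2 * (k * m)) ≤ C.ncard ^ 3 :=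
        (Nat.mul_le_mul_right _ hM).trans ((pow_succ' M _).symm.trans_le hcard)
      exact_mod_cast hsize
  refine (hlarge.or ((uniformlySieved_not_noSmallRelation (M := M) hrel).or
    (uniformlySieved_ringChar_lt (M * (H + 7))))).mono fun F _ _ τ _ _ hQ => ?_
  have := le_or_gt (M * (H + 7)) (ringChar F)
  tauto

theorem exists_prime_not_dvd {n : ℤ} (hn : n ≠ 0) : ∃ l : ℕ, l.Prime ∧ ¬ (l : ℤ) ∣ n := by
  obtain ⟨l, hln, hl⟩ := Nat.exists_infinite_primes (n.natAbs + 1)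
  refine ⟨l, hl, fun h => ?_⟩
  have := Nat.le_of_dvd (Int.natAbs_pos.2 hn) (Int.natCast_dvd.1 h)
  lia

theorem uniformlySieved_aeval_eq_zero_of_eval_ne_zero {f : ℤ[X]} (hf0 : f.eval 0 ≠ 0)
    (hf1 : f.eval (-1) ≠ 0) (hrel : ∀ g : ℤ[X], g ≠ 0 → g.natDegree < f.natDegree →
      UniformlySieved fun F _ τ => aeval τ g = 0) :
    UniformlySieved fun F _ τ => aeval τ f = 0 := by
  have hf : f ≠ 0 := fun h => hf0 (by simp [h])
  rcases Nat.eq_zero_or_pos f.natDegree with hdeg | hdeg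
  · obtain ⟨n, rfl⟩ := natDegree_eq_zero.1 hdeg
    simpa using uniformlySieved_intCast_eq_zero (n := n) (by simpa using hf)
  obtain ⟨l, hl, hlf⟩ :=
    exists_prime_not_dvd (mul_ne_zero (mul_ne_zero (leadingCoeff_ne_zero.2 hf) hf0) hf1)
  let H := 4 + (2 * |f.leadingCoeff| + 2 * ∑ i : Fin f.natDegree, |f.coeff i|).toNat
  let j := (4 * (2 * (H + 7)) ^ 3) ^ (f.natDegree * moduleCapDim (l ^ f.natDegree))
  have : NeZero (l ^ j) := ⟨(pow_pos hl.pos j).ne'⟩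
  exact uniformlySieved_of_isDigitCap (M := l ^ j) (H := H) hdeg (moduleCapDim_pos _) (by lia)
    (Nat.lt_pow_self hl.one_lt).le (fun F _ τ hτ =>
      exists_isDigitCap_of_aeval_eq_zero hl dvd_rfl hlf hdeg hτ (by lia) (by lia)) hrel

theorem uniformlySieved_aeval_eq_zero_of_isRoot {f : ℤ[X]} (hf : f ≠ 0) {r : ℤ} (hr : f.IsRoot r)
    (hτ : ∀ (F : Type) [Field F] (τ : F), τ ≠ 0 → τ ≠ -1 → τ ≠ r)
    (hrel : ∀ g : ℤ[X], g ≠ 0 → g.natDegree < f.natDegree →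
      UniformlySieved fun F _ τ => aeval τ g = 0) :
    UniformlySieved fun F _ τ => aeval τ f = 0 := by
  obtain ⟨g, rfl⟩ := dvd_iff_isRoot.2 hr
  have hg : g ≠ 0 := right_ne_zero_of_mul hf
  refine (hrel g hg ?_).mono fun F _ _ τ h0 h1 h => ?_
  · rw [natDegree_mul (X_sub_C_ne_zero r) hg, natDegree_X_sub_C]
    lia
  · rw [map_mul, mul_eq_zero] at h
    exact h.resolve_left (by simpa [sub_eq_zero] using hτ F τ h0 h1)

theorem uniformlySieved_aeval_eq_zero {f : ℤ[X]} (hf : f ≠ 0) :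
    UniformlySieved fun F _ τ => aeval τ f = 0 := by
  induction hd : f.natDegree using Nat.strong_induction_on generalizing f with
  | _ d ih =>
    have hrel : ∀ g : ℤ[X], g ≠ 0 → g.natDegree < f.natDegree →
        UniformlySieved fun F _ τ => aeval τ g = 0 := fun g hg hgf => ih _ (hd ▸ hgf) hg rfl
    by_cases hf0 : f.IsRoot 0
    · exact uniformlySieved_aeval_eq_zero_of_isRoot hf hf0 (fun F _ τ h0 _ => by simpa) hrel
    by_cases hf1 : f.IsRoot (-1)
    · exact uniformlySieved_aeval_eq_zero_of_isRoot hf hf1 (fun F _ τ _ h1 => by simpa) hrel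
    exact uniformlySieved_aeval_eq_zero_of_eval_ne_zero hf0 hf1 hrel

theorem uniformlySieved_true : UniformlySieved fun _ _ _ => True := by
  obtain ⟨k, m, hk, hm, hfree⟩ := exists_forall_isDigitCap Nat.prime_two
  let j := (4 * (2 * (4 + 7)) ^ 3) ^ (k * m)
  obtain ⟨C, hcard, hC⟩ := hfree (2 ^ j) j (by positivity) dvd_rfl
  exact uniformlySieved_of_isDigitCap hk hm (H := 4) (by lia) (Nat.lt_pow_self one_lt_two).le
    (fun F _ τ _ => ⟨C, hC F τ 4 le_rfl, hcard⟩) fun f hf _ => uniformlySieved_aeval_eq_zero hf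

theorem exists_hasCapSieve : ∃ c : ℝ, 0 < c ∧ ∀ (F : Type) [Field F] [Finite F] (τ : F),
    τ ≠ 0 → τ ≠ -1 → ∀ (V : Type) [AddCommGroup V] [Module F V] [Finite V], HasCapSieve τ V c := by
  simpa only [UniformlySieved, true_imp_iff] using uniformlySieved_true

end UniformSieves

section Reduction

theorem smul_add_smul_add_smul_eq_zero_iff {F V : Type*} [Field F] [AddCommGroup V] [Module F V]
    {a b c : F} (ha : a ≠ 0) (habc : a + b + c = 0) {x y z : V} :
    a • x + b • y + c • z = 0 ↔ x + (b / a) • y = (1 + b / a) • z := by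
  have hfactor : a • x + b • y + c • z = a • (x + (b / a) • y - (1 + b / a) • z) := by
    rw [eq_neg_of_add_eq_zero_right habc]
    match_scalars <;> field_simp
  rw [hfactor, smul_eq_zero_iff_right ha, sub_eq_zero]

theorem div_ne_zero_and_ne_neg_one {F : Type*} [Field F] {a b c : F} (ha : a ≠ 0) (hb : b ≠ 0)
    (hc : c ≠ 0) (habc : a + b + c = 0) : b / a ≠ 0 ∧ b / a ≠ -1 := by
  refine ⟨div_ne_zero hb ha, fun h => hc ?_⟩
  rw [div_eq_iff ha] at h
  linear_combination habc - h

theorem ncard_le_mul_ncard_of_fibers {α β : Type*} [Finite α] [Finite β] {s : Set α} {t : Set β}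
    {f : α → β} (hf : Set.MapsTo f s t) {d : ℝ}
    (h : ∀ b ∈ t, ({a ∈ s | f a = b}.ncard : ℝ) ≤ d) : (s.ncard : ℝ) ≤ d * t.ncard := by
  classical
  have := Fintype.ofFinite α
  have := Fintype.ofFinite β
  rw [Set.ncard_eq_toFinset_card', Set.ncard_eq_toFinset_card',
    Finset.card_eq_sum_card_fiberwise (f := f) (t := t.toFinset) (by simpa using hf),
    Nat.cast_sum, mul_comm, ← nsmul_eq_mul]
  refine Finset.sum_le_card_nsmul _ _ _ fun b hb => ?_
  refine le_trans (le_of_eq ?_) (h b (Set.mem_toFinset.1 hb))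
  rw [Set.ncard_eq_toFinset_card', Set.toFinset_ofPred, Finset.filter_and]
  congr 2
  ext
  simp

theorem ncard_capSolutions_le {F V : Type*} [Field F] [AddCommGroup V] [Module F V] [Finite V]
    {a b c : F} (ha : a ≠ 0) (habc : a + b + c = 0) {A A' : Set V} (hA' : A' ⊆ A) {d : ℝ}
    (hd : ∀ x ∈ A', ({p : V × V | p.1 ∈ A ∧ p.2 ∈ A ∧
      a • x + b • p.1 + c • p.2 = 0}.ncard : ℝ) ≤ d) :
    ((capSolutions (b / a) A').ncard : ℝ) ≤ d * A'.ncard := by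
  refine ncard_le_mul_ncard_of_fibers (f := Prod.fst) (fun t ht => ht.1) fun x hx => ?_
  refine le_trans ?_ (hd x hx)
  norm_cast
  refine Set.ncard_le_ncard_of_injOn Prod.snd ?_ ?_
  · rintro ⟨_, y, z⟩ ⟨⟨-, hy, hz, h⟩, rfl⟩
    exact ⟨hA' hy, hA' hz, (smul_add_smul_add_smul_eq_zero_iff ha habc).2 h⟩
  · rintro t ⟨-, ht⟩ t' ⟨-, ht'⟩ h
    exact Prod.ext (ht.trans ht'.symm) h

theorem loss_mul_rpow_le {c δ ε M N : ℝ} (hc : 0 < c) (hδ : 0 < δ) (hδ1 : δ ≤ 1) (hε : 0 ≤ ε)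
    (hε1 : ε ≤ 1) (hM : 0 < M) (hN : 0 < N) (hNM : δ * N ≤ M) :
    (c * δ / 2) ^ (1 / 3 : ℝ) * M ^ (1 - ε / 3) ≤ (c / (2 * N ^ ε)) ^ (1 / 3 : ℝ) * M := by
  have hpow : δ * N ^ ε ≤ M ^ ε :=
    calc δ * N ^ ε ≤ δ ^ ε * N ^ ε := by
          gcongr
          simpa using Real.rpow_le_rpow_of_exponent_ge hδ hδ1 hε1
      _ = (δ * N) ^ ε := (Real.mul_rpow hδ.le hN.le).symm
      _ ≤ M ^ ε := Real.rpow_le_rpow (by positivity) hNM hε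
  have hroot : M ^ (1 - ε / 3) = (M ^ ε)⁻¹ ^ (1 / 3 : ℝ) * M := by
    rw [← Real.rpow_neg hM.le, ← Real.rpow_mul hM.le, ← Real.rpow_add_one hM.ne']
    ring_nf
  rw [hroot, ← mul_assoc, ← Real.mul_rpow (by positivity) (by positivity)]
  gcongr
  rw [← div_eq_mul_inv, div_div, div_le_div_iff₀ (by positivity) (by positivity)]
  nlinarith [Real.rpow_nonneg hN.le ε]

end Reduction

/-- **Lemma (large cap subset of an almost cap set).**
For every `0 < δ ≤ 1` there is a constant `C = C(δ) > 0` such that: for every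
`0 < ε ≤ 1`, every finite field `F_q`, every `n`, every admissible tuple `(a, b, c)`
and every `A ⊆ F_q^n`, if `A' ⊆ A` satisfies `|A'| ≥ δ|A|` and every `x ∈ A'` has at
most `|A|^ε` pairs `(y, z) ∈ A²` with `ax + by + cz = 0`, then there is `I ⊆ A'`
which is a cap set for `(a, b, c)` and satisfies `|I| ≥ C * |A'|^{1 - ε/3}`. -/
theorem large_cap_subset (δ : ℝ) (hδ : 0 < δ) (hδ1 : δ ≤ 1) :
    ∃ C : ℝ, 0 < C ∧
      ∀ (F : Type) (_ : Field F) (_ : Fintype F) (ε : ℝ), 0 < ε → ε ≤ 1 →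
        ∀ (n : ℕ) (a b c : F), a ≠ 0 → b ≠ 0 → c ≠ 0 → a + b + c = 0 →
        ∀ A A' : Set (Fin n → F), A' ⊆ A →
          δ * (A.ncard : ℝ) ≤ (A'.ncard : ℝ) →
          (∀ x ∈ A',
            (({p : (Fin n → F) × (Fin n → F) | p.1 ∈ A ∧ p.2 ∈ A ∧
                a • x + b • p.1 + c • p.2 = 0}).ncard : ℝ) ≤ (A.ncard : ℝ) ^ ε) →
          ∃ I : Set (Fin n → F), I ⊆ A' ∧
            (∀ x ∈ I, ∀ y ∈ I, ∀ z ∈ I,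
              a • x + b • y + c • z = 0 → x = y ∧ y = z) ∧
            C * (A'.ncard : ℝ) ^ (1 - ε / 3) ≤ (I.ncard : ℝ) := by
  obtain ⟨κ, hκ, hsieve⟩ := exists_hasCapSieve
  refine ⟨1 / 2 * (κ * δ / 2) ^ (1 / 3 : ℝ), by positivity, ?_⟩
  intro F _ _ ε hε hε1 n a b c ha hb hc habc A A' hA' hcard hdeg
  have ⟨hτ0, hτ1⟩ := div_ne_zero_and_ne_neg_one ha hb hc habc
  rcases A'.eq_empty_or_nonempty with rfl | hne
  · exact ⟨∅, by simp, by simp, by simp [Real.zero_rpow (show 1 - ε / 3 ≠ 0 by linarith)]⟩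
  have hM : (1 : ℝ) ≤ A'.ncard := mod_cast hne.ncard_pos
  have hN : (1 : ℝ) ≤ A.ncard := hM.trans (mod_cast Set.ncard_le_ncard hA')
  obtain ⟨I, hIA', hI, hlarge⟩ := (hsieve F (b / a) hτ0 hτ1 (Fin n → F)).exists_isCap hκ
    (Real.one_le_rpow hN hε.le) (ncard_capSolutions_le ha habc hA' hdeg)
  refine ⟨I, hIA', fun x hx y hy z hz h => ?_, ?_⟩
  · rw [smul_add_smul_add_smul_eq_zero_iff ha habc] at h
    obtain rfl := hI x hx y hy z hz h
    exact ⟨add_right_cancel (h.trans (by rw [add_smul, one_smul])), rfl⟩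
  · have := loss_mul_rpow_le hκ hδ hδ1 hε.le hε1 (by linarith) (by linarith) hcard
    linarith
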